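/- arXiv:1812.00264 — 8 statements merged into one kernel-verified Lean document; each statement's English description precedes it below -/
import Mathlib

section
/- Let n ≥ 2 and d_1, d_2 ≥ 1 be integers, let X_1, X_2 be vector spaces over a field F, and let {x_{a,1} ⊗ x_{a,2} : a ∈ {1,...,n}} be a set of product vectors in X_1 ⊗ X_2 (each x_{a,1} and x_{a,2} nonzero) such that for each j ∈ {1,2}, dim span{x_{a,j} : a ∈ {1,...,n}} ≥ d_j. If n + 1 ≤ d_1 + d_2, then Σ_{a=1}^n x_{a,1} ⊗ x_{a,2} ≠ 0. -/
open scoped TensorProduct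

/-!
If `∑ a, x₁ a ⊗ x₂ a = 0`, then applying `f ⊗ id` for a functional `f` on `X₁` gives
`∑ a, f (x₁ a) • x₂ a = 0`. So every coefficient vector `(f (x₁ a))ₐ` is a linear relation
among the `x₂ a`. These coefficient vectors form a subspace of `Fⁿ` whose dimension is the rank
of the family `x₁` (a linear map and its transpose have the same rank), while the relations among
the `x₂ a` form a subspace of dimension `n` minus the rank of `x₂`. Hence the two ranks add up to
at most `n`, which contradicts `n + 1 ≤ d₁ + d₂`.
-/

/-- If a sum of `n` elementary tensors vanishes, the ranks of the two families of factors
add up to at most `n`. -/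
lemma finrank_add_finrank_le_of_sum_tmul_eq_zero {F : Type*} [Field F] {X₁ X₂ : Type*}
    [AddCommGroup X₁] [Module F X₁] [AddCommGroup X₂] [Module F X₂] {n : ℕ}
    (x₁ : Fin n → X₁) (x₂ : Fin n → X₂) (h : ∑ a, x₁ a ⊗ₜ[F] x₂ a = 0) :
    Set.finrank F (Set.range x₁) + Set.finrank F (Set.range x₂) ≤ n := by
  let L₁ := Fintype.linearCombination F x₁
  let L₂ := Fintype.linearCombination F x₂
  -- Coordinates identify the dual of `Fⁿ` with `Fⁿ`.
  let e : Module.Dual F (Fin n → F) ≃ₗ[F] (Fin n → F) :=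
    ((Pi.basisFun F (Fin n)).constr F).symm
  have hle : L₁.dualMap.range.map e.toLinearMap ≤ L₂.ker := by
    rintro _ ⟨_, ⟨f, rfl⟩, rfl⟩
    have hf := congrArg
      ((TensorProduct.lid F X₂).toLinearMap ∘ₗ TensorProduct.map f LinearMap.id) h
    have he : ∀ a, e (L₁.dualMap f) a = f (x₁ a) := fun a => by
      simp [e, L₁, Module.Basis.constr, Fintype.linearCombination_apply_single]
    rw [LinearMap.mem_ker]
    simpa [L₂, Fintype.linearCombination_apply, he] using hf
  have h1 : Module.finrank F L₁.dualMap.range = Set.finrank F (Set.range x₁) := by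
    rw [LinearMap.range_dualMap_eq_dualAnnihilator_ker, Set.finrank,
      ← Fintype.range_linearCombination F x₁]
    have ha := Subspace.finrank_add_finrank_dualAnnihilator_eq L₁.ker
    have hb := L₁.finrank_range_add_finrank_ker
    change _ = Module.finrank F L₁.range
    omega
  have h2 : Module.finrank F L₂.range = Set.finrank F (Set.range x₂) := by
    rw [Set.finrank, ← Fintype.range_linearCombination F x₂]
  have h3 := Submodule.finrank_mono hle
  rw [LinearEquiv.finrank_map_eq] at h3
  have h4 := L₂.finrank_range_add_finrank_ker
  rw [Module.finrank_fin_fun] at h4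
  omega

/-- Bipartite case of the main conjecture. -/
theorem bipartite_case {F : Type*} [Field F] {X₁ X₂ : Type*}
    [AddCommGroup X₁] [Module F X₁] [AddCommGroup X₂] [Module F X₂]
    {n d₁ d₂ : ℕ} (hn : 2 ≤ n) (hd₁ : 1 ≤ d₁) (hd₂ : 1 ≤ d₂)
    (x₁ : Fin n → X₁) (x₂ : Fin n → X₂)
    (hx₁ : ∀ a, x₁ a ≠ 0) (hx₂ : ∀ a, x₂ a ≠ 0)
    (hspan₁ : d₁ ≤ Set.finrank F (Set.range x₁))
    (hspan₂ : d₂ ≤ Set.finrank F (Set.range x₂))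
    (hineq : n + 1 ≤ d₁ + d₂) :
    ∑ a, x₁ a ⊗ₜ[F] x₂ a ≠ 0 := by
  intro h
  have := finrank_add_finrank_le_of_sum_tmul_eq_zero x₁ x₂ h
  omega
end

section
/- Let n ≥ 2 and m ≥ 1 be integers, let X_1, ..., X_m be vector spaces over a field F, and let {x_a = x_{a,1} ⊗ ... ⊗ x_{a,m} : a ∈ {1,...,n}} be a set of product vectors in X_1 ⊗ ... ⊗ X_m such that: (1) for every index j ∈ {1,...,m}, dim span{x_{a,j} : a ∈ {1,...,n}} ≥ 2; and (2) Σ_{a=1}^n x_a = 0, while for every subset Γ ⊂ {1,...,n} of size 1 ≤ |Γ| ≤ ⌊n/2⌋ one has Σ_{a ∈ Γ} x_a ≠ 0. Then n ≥ m + 2. -/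
/-!
The subset-sum hypothesis says that no proper nonempty subfamily of the product vectors sums to
zero, since the sum over a subset is minus the sum over its complement. For `T ⊆ {1, …, m}` let
`partialProd T a` be the product of the components of `x a` in the modes of `T`, encoded as a
function on tuples of linear functionals. The claim is that the family `partialProd T` has rank at
least `|T| + 1`, by induction on `T`; for `T` the set of all modes, the relation `∑ a, x a = 0`
bounds the rank by `n - 1`, hence `m + 1 ≤ n - 1`.

In the inductive step one adds a mode `j`. If `I` indexes an independent set of partial products over
`T`, the same indices give an independent set over `T ∪ {j}` (`linearIndepOn_of_contract`). Should
that set already span all partial products over `T ∪ {j}`, then in the expansion of the `k`-th one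
only those `i ∈ I` occur for which `x i j` is parallel to `x k j`: otherwise contract with a
functional that kills `x k j` but not `x i j`. Thus every linear relation restricts to a relation on
each class of indices with parallel `j`-th components (`sum_parallel_eq_zero`). Multiplying by the
remaining modes, `∑ a, x a = 0` then restricts to such a class, which is a proper nonempty
subset because the `j`-th components span at least two dimensions. This contradicts minimality.
-/

open scoped TensorProduct
open PiTensorProduct

/-- A product vector (elementary tensor of nonzero vectors). -/
def IsProductVector {F : Type*} [Field F] {m : ℕ} {X : Fin m → Type*}
    [∀ j, AddCommGroup (X j)] [∀ j, Module F (X j)]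
    (x : ⨂[F] j, X j) : Prop :=
  ∃ v : ∀ j, X j, (∀ j, v j ≠ 0) ∧ x = tprod F v

/-- `v` has tensor rank `r`: it is a sum of `r` product vectors, and any expression
of `v` as a sum of `s` product vectors has `s ≥ r`. -/
def HasTensorRank {F : Type*} [Field F] {m : ℕ} {X : Fin m → Type*}
    [∀ j, AddCommGroup (X j)] [∀ j, Module F (X j)]
    (v : ⨂[F] j, X j) (r : ℕ) : Prop :=
  (∃ y : Fin r → ⨂[F] j, X j, (∀ b, IsProductVector (y b)) ∧ v = ∑ b, y b) ∧
  ∀ (s : ℕ) (y : Fin s → ⨂[F] j, X j),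
    (∀ b, IsProductVector (y b)) → v = ∑ b, y b → r ≤ s

/-- The component families `x a` are in `(d 1, …, d m)`-general position. -/
def GeneralPosition (F : Type*) [Field F] {n m : ℕ} {X : Fin m → Type*}
    [∀ j, AddCommGroup (X j)] [∀ j, Module F (X j)]
    (x : Fin n → ∀ j, X j) (d : Fin m → ℕ) : Prop :=
  ∀ (j : Fin m) (I : Finset (Fin n)), I.card = d j →
    Set.finrank F ((fun a => x a j) '' ↑I) = d j

open Module

/-- `w i` plays the role of `a i ⊗ b i`, and the maps `L` that of contraction of the second factor
with a functional `g`. -/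
lemma linearIndepOn_of_contract {F ι A B W : Type*} [Field F]
    [AddCommGroup A] [Module F A] [AddCommGroup B] [Module F B] [AddCommGroup W] [Module F W]
    {a : ι → A} {b : ι → B} {w : ι → W} (hb : ∀ i, b i ≠ 0)
    (hL : ∀ g : Dual F B, ∃ L : W →ₗ[F] A, ∀ i, L (w i) = g (b i) • a i)
    {I : Finset ι} (hI : LinearIndepOn F a I) : LinearIndepOn F w I := by
  rw [linearIndepOn_finset_iff] at hI ⊢
  intro c hc i hi
  by_contra hci
  obtain ⟨g, hg⟩ : ∃ g : Dual F B, g (b i) ≠ 0 := by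
    by_contra! h
    exact hb i ((forall_dual_apply_eq_zero_iff F _).1 h)
  obtain ⟨L, hL⟩ := hL g
  have h := congrArg L hc
  simp only [map_sum, map_smul, hL, map_zero, smul_smul] at h
  exact mul_ne_zero hci hg (hI (fun i => c i * g (b i)) h i hi)

/-- If the `w i ~ a i ⊗ b i` are all spanned by those with `i ∈ I`, while the `a i` with `i ∈ I` are
independent, then every linear relation among the `w i` restricts to the class of indices whose
second factor is parallel to `b k₀`. -/
lemma sum_parallel_eq_zero {F ι A B W : Type*} [Field F] [Fintype ι]
    [AddCommGroup A] [Module F A] [AddCommGroup B] [Module F B] [AddCommGroup W] [Module F W]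
    {a : ι → A} {b : ι → B} {w : ι → W} (hb : ∀ i, b i ≠ 0)
    (hL : ∀ g : Dual F B, ∃ L : W →ₗ[F] A, ∀ i, L (w i) = g (b i) • a i)
    {I : Finset ι} (hI : LinearIndepOn F a I)
    (hspan : ∀ k, w k ∈ Submodule.span F (w '' I))
    (k₀ : ι) (S : Finset ι) (hS : ∀ i, i ∈ S ↔ b i ∈ Submodule.span F {b k₀})
    (c : ι → F) (hc : ∑ k, c k • w k = 0) : ∑ k ∈ S, c k • w k = 0 := by
  classical
  have hwI := linearIndepOn_finset_iff.1 (linearIndepOn_of_contract hb hL hI)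
  have hI' := linearIndepOn_finset_iff.1 hI
  have hC : ∀ k, ∃ C : ι → F, ∑ i ∈ I, C i • w i = w k := fun k => by
    obtain ⟨C, hC⟩ := Submodule.mem_span_image_finset_iff_exists_fun F |>.1 (hspan k)
    refine ⟨fun i => if h : i ∈ I then C ⟨i, h⟩ else 0, ?_⟩
    rw [← hC, ← Finset.sum_coe_sort I]
    simp
  choose C hC using hC
  have hpar : ∀ k, ∀ i ∈ I, C k i ≠ 0 → b i ∈ Submodule.span F {b k} := by
    intro k i hi hne
    by_contra hmem
    obtain ⟨g, hg, hgb⟩ := Submodule.exists_dual_map_eq_bot_of_notMem hmem inferInstance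
    have hgk : g (b k) = 0 := by
      have : g (b k) ∈ (Submodule.span F {b k}).map g :=
        Submodule.mem_map_of_mem (Submodule.mem_span_singleton_self _)
      rwa [hgb, Submodule.mem_bot] at this
    obtain ⟨L, hL⟩ := hL g
    have h := congrArg L (hC k)
    simp only [map_sum, map_smul, hL, smul_smul, hgk, zero_smul] at h
    exact mul_ne_zero hne hg (hI' (fun i => C k i * g (b i)) h i hi)
  have hclass : ∀ k, ∀ i ∈ I, C k i ≠ 0 → (k ∈ S ↔ i ∈ S) := by
    intro k i hi hne
    have h := hpar k i hi hne
    obtain ⟨t, ht⟩ := Submodule.mem_span_singleton.1 h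
    have ht0 : t ≠ 0 := by
      rintro rfl
      exact hb i (by simpa using ht.symm)
    rw [hS, hS, ← ht, Submodule.smul_mem_iff _ ht0]
  have hexp : ∀ U : Finset ι, ∑ k ∈ U, c k • w k = ∑ i ∈ I, (∑ k ∈ U, c k * C k i) • w i := by
    intro U
    simp_rw [Finset.sum_smul]
    rw [Finset.sum_comm]
    refine Finset.sum_congr rfl fun k _ => ?_
    rw [← hC k, Finset.smul_sum]
    simp [smul_smul]
  have hzero := hwI _ ((hexp Finset.univ).symm.trans hc)
  rw [hexp S]
  refine Finset.sum_eq_zero fun i hi => ?_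
  by_cases hiS : i ∈ S
  · have : ∑ k ∈ S, c k * C k i = ∑ k, c k * C k i := by
      refine Finset.sum_subset (Finset.subset_univ _) fun k _ hk => ?_
      by_contra h
      exact hk ((hclass k i hi (right_ne_zero_of_mul h)).2 hiS)
    rw [this, hzero i hi, zero_smul]
  · have : ∑ k ∈ S, c k * C k i = 0 := by
      refine Finset.sum_eq_zero fun k hk => ?_
      by_contra h
      exact hiS ((hclass k i hi (right_ne_zero_of_mul h)).1 hk)
    rw [this, zero_smul]

/-- The product of the components of `x a` in the modes of `T`, as the function sending a
tuple of linear functionals `ω` to `∏ l ∈ T, ω l (x a l)`. It stands for the partial tensor product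
over `T`; using functions on one fixed domain avoids a different tensor product for each `T`. -/
def partialProd {F : Type*} [Field F] {n m : ℕ} {X : Fin m → Type*}
    [∀ j, AddCommGroup (X j)] [∀ j, Module F (X j)] (x : Fin n → ∀ j, X j)
    (T : Finset (Fin m)) (a : Fin n) : (∀ j, Dual F (X j)) → F :=
  fun ω => ∏ l ∈ T, ω l (x a l)

/-- Product functionals separate the points of the tensor product. -/
lemma sum_tprod_eq_zero {F : Type*} [Field F] {n m : ℕ} {X : Fin m → Type*}
    [∀ j, AddCommGroup (X j)] [∀ j, Module F (X j)] (x : Fin n → ∀ j, X j)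
    (S : Finset (Fin n)) (h : ∑ a ∈ S, partialProd (F := F) x Finset.univ a = 0) :
    ∑ a ∈ S, tprod F (x a) = 0 := by
  let b := fun j => Basis.ofVectorSpace F (X j)
  refine (Basis.piTensorProduct b).ext_elem fun p => ?_
  simpa [partialProd] using congrFun h (fun j => (b j).coord (p j))

lemma sum_partialProd_eq_zero {F : Type*} [Field F] {n m : ℕ} {X : Fin m → Type*}
    [∀ j, AddCommGroup (X j)] [∀ j, Module F (X j)] (x : Fin n → ∀ j, X j)
    (h : ∑ a, tprod F (x a) = 0) :
    ∑ a, partialProd (F := F) x Finset.univ a = 0 := by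
  funext ω
  simpa [partialProd] using congrArg (dualDistrib (tprod F ω)) h

/-- If every relation among the partial products over `T` restricts to `S`, so does the relation
`∑ a, x a = 0`: freeze the functionals in the modes outside `T`, which turns it into a relation over
`T` with coefficients `∏ l ∉ T, ω l (x a l)`. -/
lemma sum_partialProd_restrict {F : Type*} [Field F] {n m : ℕ} {X : Fin m → Type*}
    [∀ j, AddCommGroup (X j)] [∀ j, Module F (X j)] (x : Fin n → ∀ j, X j)
    (hsum : ∑ a, partialProd (F := F) x Finset.univ a = 0)
    (T : Finset (Fin m)) (S : Finset (Fin n))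
    (hS : ∀ c : Fin n → F, ∑ k, c k • partialProd (F := F) x T k = 0 →
      ∑ k ∈ S, c k • partialProd (F := F) x T k = 0) :
    ∑ a ∈ S, partialProd (F := F) x Finset.univ a = 0 := by
  classical
  funext ω
  have key : ∑ k, (∏ l ∈ Tᶜ, ω l (x k l)) • partialProd (F := F) x T k = 0 := by
    funext ω'
    have h := congrFun hsum (fun l => if l ∈ T then ω' l else ω l)
    simp only [Finset.sum_apply, partialProd, Pi.zero_apply, Pi.smul_apply, smul_eq_mul] at h ⊢
    rw [← h]
    refine Finset.sum_congr rfl fun k _ => ?_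
    rw [← Finset.prod_mul_prod_compl T, mul_comm]
    congr 1
    · exact Finset.prod_congr rfl fun l hl => by rw [if_pos hl]
    · exact Finset.prod_congr rfl fun l hl => by rw [if_neg (Finset.mem_compl.1 hl)]
  have h := congrFun (hS _ key) ω
  simp only [Finset.sum_apply, partialProd, Pi.zero_apply, Pi.smul_apply, smul_eq_mul] at h ⊢
  rw [← h]
  refine Finset.sum_congr rfl fun k _ => ?_
  rw [← Finset.prod_mul_prod_compl T, mul_comm]

/-- The rank of the partial products over `T` is at least `|T| + 1`. -/
lemma exists_indep {F : Type*} [Field F] {n m : ℕ} {X : Fin m → Type*}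
    [∀ j, AddCommGroup (X j)] [∀ j, Module F (X j)]
    (hn : 2 ≤ n) (x : Fin n → ∀ j, X j) (hx : ∀ a j, x a j ≠ 0)
    (hspan : ∀ j, 2 ≤ Set.finrank F (Set.range fun a => x a j))
    (hsum : ∑ a, tprod F (x a) = 0)
    (hmin : ∀ S : Finset (Fin n), S.Nonempty → S ≠ Finset.univ → ∑ a ∈ S, tprod F (x a) ≠ 0)
    (T : Finset (Fin m)) :
    ∃ I : Finset (Fin n), T.card + 1 ≤ I.card ∧
      LinearIndepOn F (partialProd (F := F) x T) I := by
  classical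
  let k₀ : Fin n := ⟨0, by omega⟩
  induction T using Finset.induction_on with
  | empty =>
    refine ⟨{k₀}, by simp, ?_⟩
    rw [Finset.coe_singleton]
    refine LinearIndepOn.singleton fun h => ?_
    simpa [partialProd] using congrFun h 0
  | insert j T hj ih =>
    obtain ⟨I, hcard, hI⟩ := ih
    have hL : ∀ g : Dual F (X j), ∃ L : ((∀ j, Dual F (X j)) → F) →ₗ[F] ((∀ j, Dual F (X j)) → F),
        ∀ i, L (partialProd x (insert j T) i) = g (x i j) • partialProd x T i := by
      intro g
      refine ⟨LinearMap.funLeft F F fun ω => Function.update ω j g, fun i => ?_⟩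
      funext ω
      simp only [partialProd, LinearMap.funLeft_apply, Pi.smul_apply, smul_eq_mul]
      rw [Finset.prod_insert hj, Function.update_self]
      congr 1
      refine Finset.prod_congr rfl fun l hl => ?_
      rw [Function.update_of_ne]
      rintro rfl
      exact hj hl
    have hb : ∀ i, x i j ≠ 0 := fun i => hx i j
    have hw := linearIndepOn_of_contract (b := fun i => x i j) hb hL hI
    by_cases hsp : ∀ k, partialProd (F := F) x (insert j T) k ∈
        Submodule.span F (partialProd x (insert j T) '' I)
    · exfalso
      let S : Finset (Fin n) := {i | x i j ∈ Submodule.span F {x k₀ j}}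
      have hS : ∀ i, i ∈ S ↔ x i j ∈ Submodule.span F {x k₀ j} := fun i => by simp [S]
      refine hmin S ⟨k₀, (hS _).2 (Submodule.mem_span_singleton_self _)⟩ ?_
        (sum_tprod_eq_zero x S (sum_partialProd_restrict x (sum_partialProd_eq_zero x hsum)
          (insert j T) S fun c hc =>
            sum_parallel_eq_zero (b := fun i => x i j) hb hL hI hsp k₀ S hS c hc))
      intro hu
      have hle : Submodule.span F (Set.range fun a => x a j) ≤ Submodule.span F {x k₀ j} := by
        rw [Submodule.span_le]
        rintro _ ⟨i, rfl⟩
        exact (hS i).1 (hu ▸ Finset.mem_univ i)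
      have h1 := Submodule.finrank_mono hle
      rw [finrank_span_singleton (hb k₀)] at h1
      have h2 := hspan j
      rw [Set.finrank] at h2
      omega
    · push Not at hsp
      obtain ⟨k, hk⟩ := hsp
      have hkI : k ∉ I := fun h => hk (Submodule.subset_span ⟨k, h, rfl⟩)
      refine ⟨insert k I, ?_, ?_⟩
      · rw [Finset.card_insert_of_notMem hj, Finset.card_insert_of_notMem hkI]
        omega
      · rw [Finset.coe_insert]
        exact hw.insert hk

/-- Two-dimensional case of the main conjecture. -/
theorem two_dimensional_case {F : Type*} [Field F] {n m : ℕ} {X : Fin m → Type*}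
    [∀ j, AddCommGroup (X j)] [∀ j, Module F (X j)]
    (hn : 2 ≤ n) (hm : 1 ≤ m)
    (x : Fin n → ∀ j, X j) (hx : ∀ a j, x a j ≠ 0)
    (hspan : ∀ j, 2 ≤ Set.finrank F (Set.range fun a => x a j))
    (hsum : ∑ a, tprod F (x a) = 0)
    (hsubsum : ∀ Γ : Finset (Fin n), 1 ≤ Γ.card → Γ.card ≤ n / 2 →
      ∑ a ∈ Γ, tprod F (x a) ≠ 0) :
    m + 2 ≤ n := by
  classical
  have hmin : ∀ S : Finset (Fin n), S.Nonempty → S ≠ Finset.univ →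
      ∑ a ∈ S, tprod F (x a) ≠ 0 := by
    intro S hS hSu h0
    have hcard : S.card + Sᶜ.card = n := by
      simp [Finset.card_add_card_compl]
    have h1 := hS.card_pos
    have h2 : 0 < Sᶜ.card := by
      rw [Finset.card_pos, Finset.nonempty_iff_ne_empty]
      simpa using hSu
    by_cases h : S.card ≤ n / 2
    · exact hsubsum S h1 h h0
    · refine hsubsum Sᶜ h2 (by omega) ?_
      have := Finset.sum_add_sum_compl S fun a => tprod F (x a)
      rwa [h0, hsum, zero_add] at this
  obtain ⟨I, hcard, hI⟩ := exists_indep hn x hx hspan hsum hmin Finset.univ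
  rw [Finset.card_univ, Fintype.card_fin] at hcard
  have hne : I ≠ Finset.univ := by
    rintro rfl
    have h := linearIndepOn_finset_iff.1 hI (fun _ => 1)
      (by simpa using sum_partialProd_eq_zero x hsum) ⟨0, by omega⟩ (Finset.mem_univ _)
    exact one_ne_zero h
  have hlt := Finset.card_lt_card (Finset.ssubset_univ_iff.2 hne)
  rw [Finset.card_univ, Fintype.card_fin] at hlt
  omega
end

section
/- Let n, s, t be positive integers, and let S_1, ..., S_s ⊆ {1,...,n} and T_1, ..., T_t ⊆ {1,...,n} be two collections of non-empty pairwise disjoint subsets such that: (1) both collections partition {1,...,n}, i.e. the disjoint union of S_1,...,S_s equals the disjoint union of T_1,...,T_t equals {1,...,n}; and (2) for any subsets θ_1 ⊆ {1,...,s} and θ_2 ⊆ {1,...,t}, if the union of {S_p : p ∈ θ_1} equals the union of {T_q : q ∈ θ_2} and both equal some set Γ ⊆ {1,...,n}, then Γ ∈ {∅, {1,...,n}}. Then there exists an integer l ≥ 2 and a finite sequence of sets L_1, ..., L_l, each belonging to {S_1,...,S_s} ∪ {T_1,...,T_t}, such that: (a) L_1 ∪ ... ∪ L_l = {1,...,n};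 and (b) for all p ∈ {1,...,l−1}, (L_1 ∪ ... ∪ L_p) ∩ L_{p+1} ≠ ∅. -/
/-!
The chain is built greedily. Start with one block, repeated so that the length is already `2`
(the statement allows repetitions). If the union `U` of the current chain is not everything, some
block of one of the two partitions meets `U` without being contained in `U`: otherwise `U` would
be a union of blocks of each partition, hence empty or everything by the indecomposability
hypothesis (`exists_block_crossing`). Appending that block strictly enlarges the union, so after
finitely many steps the chain covers `{1, …, n}`.
-/

/-- A set that contains every block of a partition meeting it is the union of these blocks. -/
lemma eq_biUnion_filter_of_saturated {n s : ℕ} (S : Fin s → Finset (Fin n))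
    (hSpart : Finset.univ.biUnion S = Finset.univ) (U : Finset (Fin n))
    (hU : ∀ i, (U ∩ S i).Nonempty → S i ⊆ U) :
    (Finset.univ.filter fun i => (U ∩ S i).Nonempty).biUnion S = U := by
  ext x
  simp only [Finset.mem_biUnion, Finset.mem_filter, Finset.mem_univ, true_and]
  constructor
  · rintro ⟨i, hi, hx⟩
    exact hU i hi hx
  · intro hx
    have hx' : x ∈ Finset.univ.biUnion S := hSpart ▸ Finset.mem_univ x
    obtain ⟨i, -, hi⟩ := Finset.mem_biUnion.1 hx'
    exact ⟨i, ⟨x, Finset.mem_inter.2 ⟨hx, hi⟩⟩, hi⟩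

/-- The only place where the indecomposability hypothesis is used. -/
lemma exists_block_crossing {n s t : ℕ}
    (S : Fin s → Finset (Fin n)) (T : Fin t → Finset (Fin n))
    (hSpart : Finset.univ.biUnion S = Finset.univ)
    (hTpart : Finset.univ.biUnion T = Finset.univ)
    (hcond : ∀ (θ₁ : Finset (Fin s)) (θ₂ : Finset (Fin t)),
      θ₁.biUnion S = θ₂.biUnion T →
      θ₁.biUnion S = ∅ ∨ θ₁.biUnion S = Finset.univ)
    (U : Finset (Fin n)) (hne : U.Nonempty) (huniv : U ≠ Finset.univ) :
    ∃ B, ((∃ i, B = S i) ∨ (∃ i, B = T i)) ∧ (U ∩ B).Nonempty ∧ ¬ B ⊆ U := by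
  by_contra! h
  have h1 := eq_biUnion_filter_of_saturated S hSpart U fun i => h _ (Or.inl ⟨i, rfl⟩)
  have h2 := eq_biUnion_filter_of_saturated T hTpart U fun i => h _ (Or.inr ⟨i, rfl⟩)
  have h3 := hcond _ _ (h1.trans h2.symm)
  rw [h1] at h3
  exact h3.elim hne.ne_empty huniv

/-- The first `l` sets of `L` are blocks of `S` or `T`, each of them after the first meeting the
union of its predecessors. -/
def IsBlockChain {n s t : ℕ} (S : Fin s → Finset (Fin n)) (T : Fin t → Finset (Fin n))
    (l : ℕ) (L : ℕ → Finset (Fin n)) : Prop :=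
  (∀ p < l, (∃ i, L p = S i) ∨ (∃ i, L p = T i)) ∧
    ∀ p : ℕ, p + 1 < l → ((Finset.range (p + 1)).biUnion L ∩ L (p + 1)).Nonempty

lemma biUnion_range_update {n : ℕ} (L : ℕ → Finset (Fin n)) (B : Finset (Fin n)) {k l : ℕ}
    (hk : k ≤ l) :
    (Finset.range k).biUnion (Function.update L l B) = (Finset.range k).biUnion L := by
  refine Finset.biUnion_congr rfl fun x hx => Function.update_of_ne ?_ _ _
  have := Finset.mem_range.1 hx
  omega

lemma IsBlockChain.append {n s t : ℕ} {S : Fin s → Finset (Fin n)} {T : Fin t → Finset (Fin n)}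
    {l : ℕ} {L : ℕ → Finset (Fin n)} (h : IsBlockChain S T l L) {B : Finset (Fin n)}
    (hB : (∃ i, B = S i) ∨ (∃ i, B = T i)) (hne : ((Finset.range l).biUnion L ∩ B).Nonempty) :
    IsBlockChain S T (l + 1) (Function.update L l B) := by
  constructor
  · intro p hp
    rcases eq_or_ne p l with rfl | hpl
    · simpa using hB
    · rw [Function.update_of_ne hpl]
      exact h.1 p (by omega)
  · intro p hp
    rw [biUnion_range_update L B (by omega)]
    rcases eq_or_ne (p + 1) l with rfl | hpl
    · simpa using hne
    · rw [Function.update_of_ne hpl]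
      exact h.2 p (by omega)

/-- The combinatorial lemma on two partitions of `{1, …, n}`. -/
theorem partition_chain_lemma {n s t : ℕ} (hn : 1 ≤ n) (hs : 1 ≤ s) (ht : 1 ≤ t)
    (S : Fin s → Finset (Fin n)) (T : Fin t → Finset (Fin n))
    (hSne : ∀ p, (S p).Nonempty) (hTne : ∀ q, (T q).Nonempty)
    (hSdisj : ∀ p p', p ≠ p' → Disjoint (S p) (S p'))
    (hTdisj : ∀ q q', q ≠ q' → Disjoint (T q) (T q'))
    (hSpart : Finset.univ.biUnion S = Finset.univ)
    (hTpart : Finset.univ.biUnion T = Finset.univ)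
    (hcond : ∀ (θ₁ : Finset (Fin s)) (θ₂ : Finset (Fin t)),
      θ₁.biUnion S = θ₂.biUnion T →
      θ₁.biUnion S = ∅ ∨ θ₁.biUnion S = Finset.univ) :
    ∃ l : ℕ, 2 ≤ l ∧ ∃ L : ℕ → Finset (Fin n),
      (∀ p < l, (∃ i, L p = S i) ∨ (∃ i, L p = T i)) ∧
      (Finset.range l).biUnion L = Finset.univ ∧
      (∀ p : ℕ, p + 1 < l →
        ((Finset.range (p + 1)).biUnion L ∩ L (p + 1)).Nonempty) := by
  have key : ∀ k : ℕ, ∃ l, 2 ≤ l ∧ ∃ L, IsBlockChain S T l L ∧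
      ((Finset.range l).biUnion L).Nonempty ∧
      ((Finset.range l).biUnion L = Finset.univ ∨ k ≤ ((Finset.range l).biUnion L).card) := by
    intro k
    induction k with
    | zero =>
      obtain ⟨x, hx⟩ := hSne ⟨0, hs⟩
      refine ⟨2, le_rfl, fun _ => S ⟨0, hs⟩, ⟨fun p _ => Or.inl ⟨_, rfl⟩, fun p _ => ⟨x, ?_⟩⟩,
        ⟨x, ?_⟩, Or.inr (Nat.zero_le _)⟩
      · exact Finset.mem_inter.2
          ⟨Finset.mem_biUnion.2 ⟨0, Finset.mem_range.2 (Nat.succ_pos p), hx⟩, hx⟩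
      · exact Finset.mem_biUnion.2 ⟨0, Finset.mem_range.2 Nat.two_pos, hx⟩
    | succ k ih =>
      obtain ⟨l, hl, L, hL, hne, hk⟩ := ih
      by_cases huniv : (Finset.range l).biUnion L = Finset.univ
      · exact ⟨l, hl, L, hL, hne, Or.inl huniv⟩
      obtain ⟨B, hB, hmeet, hsub⟩ :=
        exists_block_crossing S T hSpart hTpart hcond _ hne huniv
      have hU : (Finset.range (l + 1)).biUnion (Function.update L l B)
          = B ∪ (Finset.range l).biUnion L := by
        rw [Finset.range_add_one, Finset.biUnion_insert, biUnion_range_update L B le_rfl,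
          Function.update_self]
      refine ⟨l + 1, by omega, _, hL.append hB hmeet, ?_, Or.inr ?_⟩
      · rw [hU]
        exact hne.mono Finset.subset_union_right
      · rw [hU]
        have hlt : ((Finset.range l).biUnion L).card < (B ∪ (Finset.range l).biUnion L).card :=
          Finset.card_lt_card ⟨Finset.subset_union_right,
            fun h => hsub (Finset.subset_union_left.trans h)⟩
        have := hk.resolve_left huniv
        omega
  obtain ⟨l, hl, L, hL, -, hk⟩ := key n
  refine ⟨l, hl, L, hL.1, hk.elim id fun h => ?_, hL.2⟩
  exact Finset.eq_univ_of_card _ (le_antisymm (Finset.card_le_univ _) (by simpa using h))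
end

section
/- Let n ≥ 2, m ≥ 1, and r ∈ {0, 1, ..., n−2} be integers, let X_1, ..., X_m be vector spaces over a field F, and let {x_a = x_{a,1} ⊗ ... ⊗ x_{a,m} : a ∈ {1,...,n}} be a set of product vectors in X_1 ⊗ ... ⊗ X_m such that: (1) for every index j ∈ {1,...,m}, dim span{x_{a,j} : a ∈ {1,...,n}} ≥ 2; and (2) the vector Σ_{a=1}^n x_a has tensor rank r, and for every subset Γ ⊂ {1,...,n} of size r+1 ≤ |Γ| ≤ n−1 the vector Σ_{a ∈ Γ} x_a has tensor rank ≥ r+1. Then n + r ≥ m + 2. -/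
/-!
Let `y 1, …, y r` be product vectors with `∑ x = ∑ y`. The rank hypotheses imply that this relation
among `n + r` product vectors is minimal: no proper nonempty part of it holds (`split_trivial`). So
it suffices to bound the length `N` of a minimal vanishing sum of product vectors, all of whose
`m` modes are not parallel: `N ≥ m + 2` (`card_add_two_le`).

This is by strong induction on `N`. Contract one mode `i` with a functional that kills some but not
all of the factors there, and let `P` be a minimal vanishing subsum of the contracted relation; it
is a proper part of the original one. Let `Q` be the set of remaining modes that are not parallel on
`P`, and `T` the set of the others. By induction `|P| ≥ |Q| + 2`. On the other hand the sum over `P`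
in the original relation is a product vector along the modes in `T`, so that merging all other modes
into one and `P` into one vector gives a minimal relation of length `N - |P| + 1` whose modes in `T`
are not parallel, whence `N - |P| + 1 ≥ |T| + 2`. Adding up,
`N ≥ |Q| + |T| + 3 = (m - 1) + 3`.

For the induction, tensors are replaced by the functions `φ ↦ ∏ j, φ j (x j)` on families of
functionals (`sum_tprod_eq_zero_iff`); merging modes then needs no change of the ambient space.
-/

open scoped TensorProduct
open PiTensorProduct

namespace RankTwo

open Finset

/-- The dimension bound for minimal relations. The vectors `z a`, `a ∈ S`, are functions on
`∏ j, Y j` that split off a factor `g a j` in each mode `j ∈ J`, the remaining factor `w a` being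
independent of the coordinates in `J`. If the `z a` are nonzero, sum to zero, have no other nonempty
vanishing subsum, and no mode in `J` has all its factors parallel, then there are at least
`|J| + 2` of them. The remaining factor is unrestricted, which is what allows modes to be merged in
the induction. -/
theorem card_add_two_le {F ι α : Type*} [Field F] [DecidableEq ι] [DecidableEq α] {Y : ι → Type*} (N : ℕ) :
    ∀ (S : Finset α) (J : Finset ι) (g : α → ∀ j, Y j → F) (w : α → (∀ j, Y j) → F)
      (z : α → (∀ j, Y j) → F),
      S.card = N → S.Nonempty →
      (∀ a ∈ S, ∀ j ∈ J, ∀ y t, w a (Function.update y j t) = w a y) →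
      (∀ a ∈ S, ∀ y, z a y = (∏ j ∈ J, g a j (y j)) * w a y) →
      (∀ a ∈ S, ∃ y, z a y ≠ 0) →
      (∀ y, ∑ a ∈ S, z a y = 0) →
      (∀ R ⊆ S, R.Nonempty → (∀ y, ∑ a ∈ R, z a y = 0) → R = S) →
      (∀ j ∈ J, ∃ a ∈ S, ∃ b ∈ S, ∃ s t, g a j s * g b j t ≠ g a j t * g b j s) →
      J.card + 2 ≤ N := by
  induction N using Nat.strong_induction_on with
  | _ N IH =>
  classical
  intro S J g w z hN hS hw hz hz0 hsum hmin hpar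
  have prod_upd : ∀ (a : α) (U : Finset ι) (i : ι) (y : ∀ j, Y j) (t : Y i), i ∉ U →
      ∏ j ∈ U, g a j (Function.update y i t j) = ∏ j ∈ U, g a j (y j) := by
    intro a U i y t hi
    refine prod_congr rfl fun j hj => ?_
    rw [Function.update_of_ne (show j ≠ i from fun h => hi (h ▸ hj))]
  rcases J.eq_empty_or_nonempty with rfl | ⟨i, hi⟩
  · by_contra hlt
    have : S.card = 1 := by have := hS.card_pos; simp at hlt; omega
    obtain ⟨a, rfl⟩ := card_eq_one.1 this
    obtain ⟨y, hy⟩ := hz0 a (by simp)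
    exact hy (by simpa using hsum y)
  obtain ⟨a0, ha0, a1, ha1, s, t, hst⟩ := hpar i hi
  set J0 := J.erase i with hJ0
  have hiJ0 : i ∉ J0 := by simp [hJ0]
  have hJins : insert i J0 = J := insert_erase hi
  -- `c a` is the value at `g a i` of a functional on mode `i` that kills `g a0 i` but not `g a1 i`;
  -- it is a combination of the evaluations at `s` and `t`.
  let c : α → F := fun a => g a0 i s * g a i t - g a0 i t * g a i s
  let u : α → (∀ j, Y j) → F := fun a y => (∏ j ∈ J0, g a j (y j)) * w a y
  have hzu : ∀ a ∈ S, ∀ y, z a y = g a i (y i) * u a y := by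
    intro a ha y
    rw [hz a ha, ← hJins, prod_insert hiJ0, mul_assoc]
  have hu : ∀ a ∈ S, ∀ y t, u a (Function.update y i t) = u a y := by
    intro a ha y t
    simp only [u]
    rw [prod_upd _ _ _ _ _ hiJ0, hw a ha i hi]
  have hcu : ∀ y, ∑ a ∈ S, c a * u a y = 0 := by
    intro y
    have h1 := hsum (Function.update y i t)
    have h2 := hsum (Function.update y i s)
    have e : ∑ a ∈ S, c a * u a y = g a0 i s * ∑ a ∈ S, z a (Function.update y i t)
        - g a0 i t * ∑ a ∈ S, z a (Function.update y i s) := by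
      rw [mul_sum, mul_sum, ← sum_sub_distrib]
      refine sum_congr rfl fun a ha => ?_
      rw [hzu a ha, hzu a ha, hu a ha, hu a ha]
      simp only [Function.update_self, c]
      ring
    rw [e, h1, h2]; simp
  -- After contracting mode `i` the terms outside `{c = 0}` still sum to zero; take a minimal
  -- vanishing subsum of this contracted relation.
  let good : Finset α → Prop := fun P => P ⊆ S ∧ P.Nonempty ∧ (∀ a ∈ P, c a ≠ 0) ∧
    ∀ y, ∑ a ∈ P, c a * u a y = 0
  have hex : good (S.filter (fun a => c a ≠ 0)) := by
    refine ⟨filter_subset _ _, ⟨a1, by simp [ha1, c, sub_ne_zero, hst]⟩, by simp, fun y => ?_⟩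
    refine (sum_subset (filter_subset _ _) fun a ha hna => ?_).trans (hcu y)
    have : c a = 0 := by by_contra h; exact hna (by simp [ha, h])
    simp [this]
  obtain ⟨P, -, ⟨hPS, hPne, hPc, hPsum⟩, hPmin⟩ := exists_minimal_le_of_wellFoundedLT good _ hex
  have ha0P : a0 ∉ P := fun h => hPc a0 h (by simp only [c]; ring)
  have hPproper : P ≠ S := fun h => ha0P (h ▸ ha0)
  -- Split the other modes into those that are parallel on `P` (`T`) and the rest (`Q`).
  let par : ι → Prop := fun j => ∀ a ∈ P, ∀ b ∈ P, ∀ s t, g a j s * g b j t = g a j t * g b j s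
  let T := J0.filter par
  let Q := J0.filter (fun j => ¬ par j)
  have hTQ : T.card + Q.card = J0.card := card_filter_add_card_filter_not _
  have hJ0card : J0.card + 1 = J.card := card_erase_add_one hi
  have hprodTQ : ∀ a (y : ∀ j, Y j), ∏ j ∈ J0, g a j (y j) =
      (∏ j ∈ T, g a j (y j)) * ∏ j ∈ Q, g a j (y j) := fun a y =>
    (prod_filter_mul_prod_filter_not _ _ _).symm
  have hTJ : T ⊆ J := (filter_subset _ _).trans (erase_subset _ _)
  have hQJ : Q ⊆ J := (filter_subset _ _).trans (erase_subset _ _)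
  have hdisj : ∀ j, j ∈ T → j ∉ Q := fun j h1 h2 => (mem_filter.1 h2).2 (mem_filter.1 h1).2
  have hPlt : P.card < S.card := card_lt_card (hPS.ssubset_of_ne hPproper)
  -- The contracted relation on `P`, with the modes in `Q`.
  have hP2 : Q.card + 2 ≤ P.card := by
    refine IH P.card (hN ▸ hPlt) P Q g (fun a y => c a * ((∏ j ∈ T, g a j (y j)) * w a y))
      (fun a y => c a * u a y) rfl hPne ?_ ?_ ?_ hPsum ?_ ?_
    · intro a ha j hj y t
      rw [prod_upd _ _ _ _ _ (fun h => hdisj j h hj), hw a (hPS ha) j (hQJ hj)]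
    · intro a ha y
      simp only [u]
      rw [hprodTQ]; ring
    · intro a ha
      obtain ⟨y, hy⟩ := hz0 a (hPS ha)
      rw [hzu a (hPS ha)] at hy
      exact ⟨y, mul_ne_zero (hPc a ha) (right_ne_zero_of_mul hy)⟩
    · intro R hR hRne hR0
      exact hR.antisymm (hPmin ⟨hR.trans hPS, hRne, fun a ha => hPc a (hR ha), hR0⟩ hR)
    · intro j hj
      have := (mem_filter.1 hj).2
      simp only [par] at this
      push Not at this
      exact this
  obtain ⟨p, hp⟩ := hPne
  obtain ⟨y0, hy0⟩ := hz0 p (hPS hp)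
  have hgp : ∀ j ∈ J, g p j (y0 j) ≠ 0 := by
    rw [hz p (hPS hp)] at hy0
    exact prod_ne_zero_iff.1 (left_ne_zero_of_mul hy0)
  -- Replace the whole block `P` by the single vector `∑ b ∈ P, z b`, indexed by `p`. It is still a
  -- product along the modes in `T`, with the same factors `g p j`.
  let S' := insert p (S \ P)
  have hpS : p ∉ S \ P := by simp [hp]
  have hS'card : S'.card + P.card = S.card + 1 := by
    have : S'.card = (S \ P).card + 1 := card_insert_of_notMem hpS
    have := card_sdiff_add_card_eq_card hPS
    omega
  let z' : α → (∀ j, Y j) → F := fun a y => if a = p then ∑ b ∈ P, z b y else z a y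
  have hz'p : ∀ y, z' p y = ∑ b ∈ P, z b y := fun y => by simp [z']
  have hz'n : ∀ a ∈ S \ P, ∀ y, z' a y = z a y := fun a ha y => by
    simp [z', show a ≠ p from fun h => hpS (h ▸ ha)]
  -- For `b ∈ P` and `j ∈ T`, `g b j` is the multiple of `g p j` by `g b j (y0 j) / g p j (y0 j)`.
  let w' : α → (∀ j, Y j) → F := fun a y =>
    if a = p then ∑ b ∈ P, (∏ j ∈ T, g b j (y0 j) / g p j (y0 j)) *
      ((∏ j ∈ Q, g b j (y j)) * (g b i (y i) * w b y))
    else (∏ j ∈ Q, g a j (y j)) * (g a i (y i) * w a y)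
  have hiT : i ∉ T := fun h => hiJ0 (mem_filter.1 h).1
  have hupd : ∀ a ∈ S, ∀ j ∈ T, ∀ (y : ∀ j, Y j) t, (∏ k ∈ Q, g a k (Function.update y j t k)) *
      (g a i (Function.update y j t i) * w a (Function.update y j t)) =
      (∏ j ∈ Q, g a j (y j)) * (g a i (y i) * w a y) := by
    intro a ha j hj y t
    rw [prod_upd _ _ _ _ _ (hdisj j hj), hw a ha j (hTJ hj),
      Function.update_of_ne (show i ≠ j from fun h => hiT (h ▸ hj))]
  have hfac : ∀ a ∈ S, ∀ y, z a y = (∏ j ∈ T, g a j (y j)) *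
      ((∏ j ∈ Q, g a j (y j)) * (g a i (y i) * w a y)) := by
    intro a ha y
    rw [hzu a ha]; simp only [u]; rw [hprodTQ]; ring
  have hS'sub : ∀ a ∈ S', a = p ∨ a ∈ S \ P := fun a ha => mem_insert.1 ha
  have hsumR : ∀ R ⊆ S', p ∈ R → ∀ y, ∑ a ∈ R, z' a y = ∑ a ∈ R ∪ P, z a y := by
    intro R hR hpR y
    have e : R ∪ P = (R.erase p) ∪ P := by
      ext a
      by_cases h : a = p
      · subst h; simp [hp]
      · simp [h]
    have hsub : R.erase p ⊆ S \ P := fun a ha =>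
      (hS'sub a (hR (mem_of_mem_erase ha))).resolve_left (ne_of_mem_erase ha)
    have hd : Disjoint (R.erase p) P := disjoint_of_subset_left hsub sdiff_disjoint
    rw [e, sum_union hd, ← sum_erase_add _ _ hpR, hz'p]
    congr 1
    exact sum_congr rfl fun a ha => hz'n a (hsub ha) y
  have hS'P : S' ∪ P = S := by
    ext a
    simp only [S', mem_union, mem_insert, mem_sdiff]
    constructor
    · rintro ((rfl | h) | h)
      exacts [hPS hp, h.1, hPS h]
    · intro h
      by_cases h' : a ∈ P <;> simp [h, h']
  have hpS' : p ∈ S' := mem_insert_self _ _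
  -- The merged relation on `S'`, with the modes in `T`.
  have hS'2 : T.card + 2 ≤ S'.card := by
    refine IH S'.card (by omega) S' T g w' z' rfl ⟨p, hpS'⟩ ?_ ?_ ?_ ?_ ?_ ?_
    · intro a ha j hj y t
      rcases hS'sub a ha with rfl | ha
      · simp only [w', if_true]
        refine sum_congr rfl fun b hb => ?_
        rw [hupd b (hPS hb) j hj]
      · simp only [w', show a ≠ p from fun h => hpS (h ▸ ha), if_false]
        exact hupd a (mem_sdiff.1 ha).1 j hj y t
    · intro a ha y
      rcases hS'sub a ha with rfl | ha
      · rw [hz'p]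
        simp only [w', if_true]
        rw [mul_sum]
        refine sum_congr rfl fun b hb => ?_
        rw [hfac b (hPS hb)]
        conv_rhs => rw [← mul_assoc, ← prod_mul_distrib]
        congr 1
        refine prod_congr rfl fun j hj => ?_
        have h1 := (mem_filter.1 hj).2 b hb a hp (y j) (y0 j)
        have h2 := hgp j (hTJ hj)
        field_simp
        linear_combination h1
      · rw [hz'n a ha]
        simp only [w', show a ≠ p from fun h => hpS (h ▸ ha), if_false]
        exact hfac a (mem_sdiff.1 ha).1 y
    · intro a ha
      rcases hS'sub a ha with rfl | ha
      · by_contra h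
        push Not at h
        exact hPproper (hmin P hPS ⟨a, hp⟩ fun y => by rw [← hz'p, h])
      · obtain ⟨y, hy⟩ := hz0 a (mem_sdiff.1 ha).1
        exact ⟨y, by rwa [hz'n a ha]⟩
    · intro y
      rw [hsumR S' Subset.rfl hpS' y, hS'P, hsum]
    · intro R hR hRne hR0
      by_cases hpR : p ∈ R
      · have h1 : R ∪ P = S := by
          refine hmin _ ?_ ⟨p, mem_union_left _ hpR⟩ fun y => by rw [← hsumR R hR hpR, hR0]
          rw [← hS'P]; exact union_subset_union hR Subset.rfl
        refine hR.antisymm fun a ha => ?_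
        rcases hS'sub a ha with rfl | ha
        · exact hpR
        · obtain ⟨h2, h3⟩ := mem_sdiff.1 ha
          rw [← h1] at h2
          exact (mem_union.1 h2).resolve_right h3
      · exfalso
        have hsub : R ⊆ S \ P := fun a ha =>
          (hS'sub a (hR ha)).resolve_left (fun h => hpR (h ▸ ha))
        have : R = S := hmin R (hsub.trans sdiff_subset) hRne fun y => by
          rw [← hR0 y]; exact (sum_congr rfl fun a ha => hz'n a (hsub ha) y).symm
        exact hpR (this ▸ hPS hp)
    · intro j hj
      by_contra hcon
      push Not at hcon
      obtain ⟨a, ha, b, hb, s, t, hne⟩ := hpar j (hTJ hj)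
      -- If mode `j` were parallel on `S'`, then it would be on `S`, every factor being proportional
      -- to the nonzero `g p j`.
      have hprop : ∀ a ∈ S, ∀ s, g a j s * g p j (y0 j) = g a j (y0 j) * g p j s := by
        intro a ha s
        by_cases haP : a ∈ P
        · exact (mem_filter.1 hj).2 a haP p hp s (y0 j)
        · exact hcon a (mem_insert_of_mem (mem_sdiff.2 ⟨ha, haP⟩)) p hpS' s (y0 j)
      have h0 := hgp j (hTJ hj)
      apply hne
      apply mul_right_cancel₀ (mul_ne_zero h0 h0)
      linear_combination g b j t * g p j (y0 j) * hprop a ha s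
        + g a j (y0 j) * g p j s * hprop b hb t
        - g b j s * g p j (y0 j) * hprop a ha t - g a j (y0 j) * g p j t * hprop b hb s
  omega

/-- Since bases of the factors give a basis of the tensor product, a tensor vanishes as soon as all
products of functionals `⊗ φ j` vanish on it. -/
theorem sum_tprod_eq_zero_iff {F : Type*} [Field F] {m : ℕ} {X : Fin m → Type*}
    [∀ j, AddCommGroup (X j)] [∀ j, Module F (X j)] {α : Type*} (R : Finset α) (c : α → F)
    (v : α → ∀ j, X j) :
    ∑ a ∈ R, c a • PiTensorProduct.tprod F (v a) = 0 ↔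
      ∀ φ : ∀ j, Module.Dual F (X j), ∑ a ∈ R, (∏ j, φ j (v a j)) * c a = 0 := by
  constructor
  · intro h φ
    have := congrArg (PiTensorProduct.lift
      ((MultilinearMap.mkPiAlgebra F (Fin m) F).compLinearMap φ)) h
    simpa [mul_comm] using this
  · intro h
    let b := fun j => Module.Basis.ofVectorSpace F (X j)
    refine (Basis.piTensorProduct b).ext_elem fun p => ?_
    have := h fun j => (b j).coord (p j)
    simp only [map_sum, map_smul, Finsupp.coe_finsetSum, Finset.sum_apply, Finsupp.smul_apply,
      Basis.piTensorProduct_repr_tprod_apply, map_zero, Finsupp.zero_apply, smul_eq_mul]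
    simpa [mul_comm] using this

/-- A mode spanning dimension at least two contains two non-parallel vectors; in the form needed for
`card_add_two_le`, some `2 × 2` minor formed with two functionals is nonzero. -/
theorem exists_not_parallel {F X κ : Type*} [Field F] [AddCommGroup X] [Module F X] (x : κ → X)
    (hx : ∀ a, x a ≠ 0) (h : 2 ≤ Set.finrank F (Set.range x)) :
    ∃ a b, ∃ φ ψ : Module.Dual F X, φ (x a) * ψ (x b) ≠ ψ (x a) * φ (x b) := by
  by_contra! hcon
  rcases isEmpty_or_nonempty κ with hκ | ⟨⟨o⟩⟩
  · rw [Set.finrank, Set.range_eq_empty, Submodule.span_empty, finrank_bot] at h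
    omega
  obtain ⟨ψ, hψ⟩ : ∃ ψ : Module.Dual F X, ψ (x o) ≠ 0 := by
    by_contra! h0
    exact hx o ((Module.forall_dual_apply_eq_zero_iff F _).1 h0)
  have hle : Submodule.span F (Set.range x) ≤ Submodule.span F {x o} := by
    rw [Submodule.span_le]
    rintro _ ⟨a, rfl⟩
    refine Submodule.mem_span_singleton.2 ⟨ψ (x a) / ψ (x o), ?_⟩
    rw [← sub_eq_zero, ← Module.forall_dual_apply_eq_zero_iff F]
    intro φ
    have := hcon a o φ ψ
    simp only [map_sub, map_smul, smul_eq_mul]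
    field_simp
    linear_combination -this
  have := Submodule.finrank_mono hle
  have := finrank_span_singleton (K := F) (hx o)
  unfold Set.finrank at h
  omega

theorem exists_fin_sum {M κ : Type*} [AddCommMonoid M] (p : M → Prop) (T : Finset κ) (y : κ → M)
    (hy : ∀ b ∈ T, p (y b)) :
    ∃ y' : Fin T.card → M, (∀ b, p (y' b)) ∧ ∑ b ∈ T, y b = ∑ b, y' b := by
  refine ⟨fun i => y (T.equivFin.symm i), fun b => hy _ (T.equivFin.symm b).2, ?_⟩
  rw [← Finset.sum_coe_sort T]
  exact (Equiv.sum_comp T.equivFin.symm (fun b : T => y b)).symm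

/-- The rank hypotheses make the relation `∑ x = ∑ y` minimal: no subfamily of the `x a` and `y b`
satisfies it, except the empty and the full one. If `A ≠ univ`, then `|A| ≤ |B|`; if also `A ≠ ∅`,
the same holds for the complements, and adding the two gives `n ≤ r`. -/
theorem split_trivial {F : Type*} [Field F] {n m r : ℕ} {X : Fin m → Type*}
    [∀ j, AddCommGroup (X j)] [∀ j, Module F (X j)]
    (hn : 2 ≤ n) (hr : r ≤ n - 2)
    (x : Fin n → ⨂[F] j, X j) (hx : ∀ a, IsProductVector (x a))
    (y : Fin r → ⨂[F] j, X j) (hy : ∀ b, IsProductVector (y b))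
    (hxy : ∑ a, x a = ∑ b, y b)
    (hrank : ∀ (s : ℕ) (y : Fin s → ⨂[F] j, X j),
      (∀ b, IsProductVector (y b)) → ∑ a, x a = ∑ b, y b → r ≤ s)
    (hsubrank : ∀ Γ : Finset (Fin n), r + 1 ≤ Γ.card → Γ.card ≤ n - 1 →
      ∀ (s : ℕ) (y : Fin s → ⨂[F] j, X j), (∀ b, IsProductVector (y b)) →
        (∑ a ∈ Γ, x a) = ∑ b, y b → r + 1 ≤ s)
    (A : Finset (Fin n)) (B : Finset (Fin r)) (hAB : ∑ a ∈ A, x a = ∑ b ∈ B, y b) :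
    (A = ∅ ∧ B = ∅) ∨ (A = univ ∧ B = univ) := by
  have claim : ∀ (A : Finset (Fin n)) (B : Finset (Fin r)), ∑ a ∈ A, x a = ∑ b ∈ B, y b →
      A ≠ univ → A.card ≤ B.card := by
    intro A B hAB hA
    by_contra! hlt
    have hAn : A.card < n := by
      have := (card_lt_iff_ne_univ A).2 hA
      simpa using this
    have hBr : B.card ≤ r := by simpa using card_le_univ B
    -- Enlarge `A` to `Γ` with `max (r + 1) |A|` elements; the expression `∑_B y + ∑_{Γ \ A} x` of
    -- `∑_Γ x` is too short.
    obtain ⟨Γ, hAΓ, -, hΓ⟩ := exists_subsuperset_card_eq (subset_univ A)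
      (le_max_right (r + 1) A.card) (by simp; omega)
    obtain ⟨y', hy', hsum⟩ := exists_fin_sum IsProductVector ((Γ \ A).disjSum B) (Sum.elim x y)
      (by rintro (a | b) -; exacts [hx a, hy b])
    rw [sum_disjSum] at hsum
    simp only [Sum.elim_inl, Sum.elim_inr] at hsum
    rw [← hAB, sum_sdiff hAΓ] at hsum
    have h1 := hsubrank Γ (by omega) (by omega) _ y' hy' hsum
    rw [card_disjSum] at h1
    have := card_sdiff_add_card_eq_card hAΓ
    omega
  have full : ∀ B : Finset (Fin r), ∑ a, x a = ∑ b ∈ B, y b → B = univ := by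
    intro B hB
    obtain ⟨y', hy', hsum⟩ := exists_fin_sum IsProductVector B y (fun b _ => hy b)
    have := hrank _ y' hy' (hB.trans hsum)
    refine (card_eq_iff_eq_univ B).1 (le_antisymm (card_le_univ B) (by simpa using this))
  have hcompl : ∑ a ∈ Aᶜ, x a = ∑ b ∈ Bᶜ, y b := by
    have h1 := sum_add_sum_compl A x
    have h2 := sum_add_sum_compl B y
    rw [hxy, ← h2, hAB] at h1
    exact add_left_cancel h1
  by_cases h1 : A = univ
  · subst h1
    exact Or.inr ⟨rfl, full B hAB⟩
  by_cases h2 : A = ∅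
  · subst h2
    rw [compl_empty] at hcompl
    exact Or.inl ⟨rfl, by simpa using full _ hcompl⟩
  have h3 := claim A B hAB h1
  have h4 := claim _ _ hcompl (by simpa using h2)
  have h5 := card_add_card_compl A
  have h6 := card_add_card_compl B
  simp only [Fintype.card_fin] at h5 h6
  omega

end RankTwo

/-- Theorem on tensor rank of sums of product vectors (two-dimensional case of
Conjecture 3 of the paper). -/
theorem rank_two_dimensional_case {F : Type*} [Field F] {n m r : ℕ} {X : Fin m → Type*}
    [∀ j, AddCommGroup (X j)] [∀ j, Module F (X j)]
    (hn : 2 ≤ n) (hm : 1 ≤ m) (hr : r ≤ n - 2)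
    (x : Fin n → ∀ j, X j) (hx : ∀ a j, x a j ≠ 0)
    (hspan : ∀ j, 2 ≤ Set.finrank F (Set.range fun a => x a j))
    (hrank : HasTensorRank (∑ a, tprod F (x a)) r)
    (hsubrank : ∀ Γ : Finset (Fin n), r + 1 ≤ Γ.card → Γ.card ≤ n - 1 →
      ∀ (s : ℕ) (y : Fin s → ⨂[F] j, X j), (∀ b, IsProductVector (y b)) →
        (∑ a ∈ Γ, tprod F (x a)) = ∑ b, y b → r + 1 ≤ s) :
    m + 2 ≤ n + r := by
  obtain ⟨⟨y, hy, hxy⟩, hmin⟩ := hrank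
  have split := RankTwo.split_trivial hn hr (fun a => PiTensorProduct.tprod F (x a))
    (fun a => ⟨x a, hx a, rfl⟩) y hy hxy hmin hsubrank
  choose v hv hyv using hy
  -- The terms `x a` with coefficient `1` and `y b` with coefficient `-1`.
  let g : Fin n ⊕ Fin r → ∀ j, X j := Sum.elim x v
  let c : Fin n ⊕ Fin r → F := Sum.elim (fun _ => 1) (fun _ => -1)
  have hg : ∀ a j, g a j ≠ 0 := by
    rintro (a | b) j
    exacts [hx a j, hv b j]
  have hc : ∀ a, c a ≠ 0 := by
    rintro (a | b) <;> simp [c]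
  have hsum : ∀ R : Finset (Fin n ⊕ Fin r),
      ∑ a ∈ R, c a • PiTensorProduct.tprod F (g a) =
        ∑ a ∈ R.toLeft, PiTensorProduct.tprod F (x a) - ∑ b ∈ R.toRight, y b := by
    intro R
    conv_lhs => rw [← Finset.toLeft_disjSum_toRight (u := R)]
    rw [Finset.sum_disjSum]
    simp [c, g, hyv, sub_eq_add_neg]
  have key := RankTwo.card_add_two_le (F := F) (Y := fun j => Module.Dual F (X j)) _
    (Finset.univ : Finset (Fin n ⊕ Fin r)) (Finset.univ : Finset (Fin m))
    (fun a j φ => φ (g a j)) (fun a _ => c a) (fun a φ => (∏ j, φ j (g a j)) * c a)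
    rfl ⟨Sum.inl ⟨0, by omega⟩, Finset.mem_univ _⟩ (fun _ _ _ _ _ _ => rfl)
    (fun _ _ _ => rfl) ?_ ?_ ?_ ?_
  · simp only [Finset.card_univ, Fintype.card_fin, Fintype.card_sum] at key
    exact key
  · intro a _
    have : ∀ j, ∃ φ : Module.Dual F (X j), φ (g a j) ≠ 0 := by
      intro j
      by_contra! h0
      exact hg a j ((Module.forall_dual_apply_eq_zero_iff F _).1 h0)
    choose φ hφ using this
    exact ⟨φ, mul_ne_zero (Finset.prod_ne_zero_iff.2 fun j _ => hφ j) (hc a)⟩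
  · refine (RankTwo.sum_tprod_eq_zero_iff _ c g).1 ?_
    rw [hsum]
    simpa [sub_eq_zero] using hxy
  · intro R _ hRne hR
    have h := (RankTwo.sum_tprod_eq_zero_iff R c g).2 hR
    rw [hsum, sub_eq_zero] at h
    rw [← Finset.toLeft_disjSum_toRight (u := R)] at hRne ⊢
    rcases split _ _ h with ⟨h1, h2⟩ | ⟨h1, h2⟩
    · rw [h1, h2] at hRne
      simp at hRne
    · rw [h1, h2, Finset.univ_disjSum_univ]
  · intro j _
    obtain ⟨a, b, φ, ψ, h⟩ := RankTwo.exists_not_parallel (fun a => x a j) (fun a => hx a j)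
      (hspan j)
    exact ⟨Sum.inl a, Finset.mem_univ _, Sum.inl b, Finset.mem_univ _, φ, ψ, h⟩
end

section
/- Let n and m be positive integers, let X_1, ..., X_m be vector spaces over a field F, and let {x_a = x_{a,1} ⊗ ... ⊗ x_{a,m} : a ∈ {1,...,n}} be a set of linearly independent product vectors in X_1 ⊗ ... ⊗ X_m. If there exist non-zero scalars α_1, ..., α_n ∈ F \ {0} such that Σ_{a=1}^n α_a x_a is itself a product vector, then dim span{x_{a,j} : a ∈ {1,...,n}} > 1 for at most n − 1 indices j ∈ {1,...,m}. -/
/-!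
Adjoining the product vector `v = ∑ a, α a • tprod F (x a)` to the family gives `n + 1` product
vectors spanning a space of dimension `n`, and since all `α a` are nonzero no proper nonempty
subfamily splits off (`spanConnected_option_elim`): the family is *connected*, meaning that the
spans of a proper nonempty subfamily and of its complement always meet nontrivially. The theorem
follows from the more general claim that a nonempty connected family of product vectors spanning
a space of dimension `r` is non-parallel in at most `r - 1` subsystems
(`card_nonparallel_le`).

The claim is proved by adding one subsystem at a time. Write the members of the family as
`u a = u' a ⊗ y a`, where `y a` is the component in the new subsystem.
* If `u` is connected, so is `u'`: if the spans of `u' '' S` and `u' '' Sᶜ` are disjoint, then a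
  vector `w` in both the span of `u '' S` and that of `u '' Sᶜ` is annihilated by every functional
  of the new subsystem, so `w = 0` (`SpanConnected.of_slices`).
* The dimension of the span of `u` is at least that of `u'`, because a basis chosen among the
  `u' a` lifts to independent vectors `u a`. If the two dimensions agree, the lifted vectors span
  everything; comparing coefficients shows that every `y b` is proportional to `y a` for each basis
  index `a` occurring in the expansion of `u' b`. Connectedness of `u'` then makes all the
  `y b` parallel (`parallel_of_finrank_le`).
So each non-parallel subsystem raises the dimension by at least one.

Bases of the factors are used to regard a product vector as the function
`k ↦ ∏ j, y j (k j)` on the product of the index sets; restricting the product to a finset of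
factors then describes the vectors on a subset of the subsystems without changing the ambient space.
-/

open scoped TensorProduct
open PiTensorProduct

open Module Submodule

/-- A family of vectors is connected if its index set has no proper nonempty subset `S` such that
the spans of the subfamilies on `S` and on its complement intersect trivially. For families without
zero vectors this is connectedness of the associated linear matroid. -/
def SpanConnected (F : Type*) [Field F] {E V : Type*} [AddCommGroup V] [Module F V]
    (u : E → V) : Prop :=
  ∀ S : Set E, Disjoint (span F (u '' S)) (span F (u '' Sᶜ)) → S = ∅ ∨ S = Set.univ

section Slices

variable {F E ι V V' : Type*} [Field F] [AddCommGroup V] [Module F V]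
  [AddCommGroup V'] [Module F V'] {u : E → V} {u' : E → V'} {y : E → ι → F}
  {T : ι → V →ₗ[F] V'}

/-- Here and below `u a` plays the role of `u' a ⊗ y a`, and `T i` is contraction with the `i`-th
coordinate functional of the second factor. -/
lemma SpanConnected.of_slices (hT : ∀ i a, T i (u a) = y a i • u' a)
    (hinj : ∀ w, (∀ i, T i w = 0) → w = 0) (hu : SpanConnected F u) : SpanConnected F u' := by
  intro S hS
  apply hu S
  have key : ∀ (R : Set E) (i : ι) (w : V), w ∈ span F (u '' R) → T i w ∈ span F (u' '' R) := by
    intro R i w hw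
    have h : span F (u '' R) ≤ (span F (u' '' R)).comap (T i) := by
      rw [span_le]
      rintro _ ⟨a, ha, rfl⟩
      simp only [SetLike.mem_coe, mem_comap, hT]
      exact smul_mem _ _ (subset_span ⟨a, ha, rfl⟩)
    exact h hw
  rw [disjoint_def] at hS ⊢
  exact fun w h1 h2 => hinj w fun i => hS _ (key S i w h1) (key Sᶜ i w h2)

lemma LinearIndependent.of_slices {κ : Type*} [Fintype κ] {e : κ → E}
    (hT : ∀ i a, T i (u a) = y a i • u' a) (hy : ∀ a, y a ≠ 0)
    (hli : LinearIndependent F (u' ∘ e)) : LinearIndependent F (u ∘ e) := by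
  rw [Fintype.linearIndependent_iff] at hli ⊢
  intro c hc k
  obtain ⟨i, hi⟩ := Function.ne_iff.mp (hy (e k))
  have h := congrArg (T i) hc
  simp only [map_sum, map_smul, Function.comp_apply, hT, map_zero, smul_smul] at h
  exact (mul_eq_zero.mp (hli (fun k => c k * y (e k) i) h k)).resolve_right hi

lemma finrank_span_le_of_slices [Finite E] (hT : ∀ i a, T i (u a) = y a i • u' a)
    (hy : ∀ a, y a ≠ 0) :
    finrank F (span F (Set.range u')) ≤ finrank F (span F (Set.range u)) := by
  obtain ⟨κ, e, he, hsp, hli⟩ := exists_linearIndependent' F u'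
  have := Finite.of_injective e he
  have := Fintype.ofFinite κ
  rw [← hsp, finrank_span_eq_card hli, ← finrank_span_eq_card (hli.of_slices hT hy)]
  have := FiniteDimensional.span_of_finite F (Set.finite_range u)
  exact finrank_mono (span_mono (Set.range_comp_subset_range e u))

/-- If tensoring a connected family with the `y a` does not increase the dimension of its span,
then the `y a` are pairwise proportional. -/
lemma parallel_of_finrank_le [Finite E] (hT : ∀ i a, T i (u a) = y a i • u' a)
    (hy : ∀ a, y a ≠ 0) (hu' : SpanConnected F u')
    (hr : finrank F (span F (Set.range u)) ≤ finrank F (span F (Set.range u'))) (a b : E) :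
    ∃ c : F, y b = c • y a := by
  obtain ⟨κ, e, he, hsp, hli⟩ := exists_linearIndependent' F u'
  have := Finite.of_injective e he
  have := Fintype.ofFinite κ
  have := FiniteDimensional.span_of_finite F (Set.finite_range u)
  have hspu : span F (Set.range (u ∘ e)) = span F (Set.range u) := by
    apply eq_of_le_of_finrank_le (span_mono (Set.range_comp_subset_range e u))
    rwa [finrank_span_eq_card (hli.of_slices hT hy), ← finrank_span_eq_card hli, hsp]
  let S : Set E := {b | ∃ c : F, c ≠ 0 ∧ y b = c • y a}
  -- Every basis vector occurring in the expansion of `u' b` has its index on the same side of `S`.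
  have key : ∀ b, ∃ d : κ → F, ∑ k, d k • u' (e k) = u' b ∧
      ∀ k, d k ≠ 0 → (b ∈ S ↔ e k ∈ S) := by
    intro b
    obtain ⟨d, hd⟩ := (mem_span_range_iff_exists_fun F).mp
      (hsp ▸ subset_span (Set.mem_range_self b) : u' b ∈ span F (Set.range (u' ∘ e)))
    obtain ⟨c, hc⟩ := (mem_span_range_iff_exists_fun F).mp
      (hspu ▸ subset_span (Set.mem_range_self b) : u b ∈ span F (Set.range (u ∘ e)))
    refine ⟨d, hd, fun k hk => ?_⟩
    have hcoef : ∀ i, d k * y b i = c k * y (e k) i := by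
      intro i
      have h := congrArg (T i) hc
      simp only [map_sum, map_smul, Function.comp_apply, hT, smul_smul] at h
      rw [← hd, Finset.smul_sum] at h
      simp only [Function.comp_apply, smul_smul] at h
      have h0 : ∑ k, (c k * y (e k) i - y b i * d k) • (u' ∘ e) k = 0 := by
        simp only [sub_smul, Finset.sum_sub_distrib, Function.comp_apply, h, sub_self]
      have := Fintype.linearIndependent_iff.mp hli _ h0 k
      linear_combination -this
    have hyb : y b = (c k / d k) • y (e k) := by
      ext i
      simp only [Pi.smul_apply, smul_eq_mul]
      field_simp
      linear_combination hcoef i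
    have hne : c k / d k ≠ 0 := fun h => hy b (by rw [hyb, h, zero_smul])
    constructor
    · rintro ⟨t, ht, h⟩
      exact ⟨(c k / d k)⁻¹ * t, mul_ne_zero (inv_ne_zero hne) ht, by
        rw [mul_smul, ← h, hyb, smul_smul, inv_mul_cancel₀ hne, one_smul]⟩
    · rintro ⟨t, ht, h⟩
      exact ⟨(c k / d k) * t, mul_ne_zero hne ht, by rw [hyb, h, smul_smul]⟩
  have hle : ∀ R : Set E, (∀ b ∈ R, ∀ k, (b ∈ S ↔ e k ∈ S) → e k ∈ R) →
      span F (u' '' R) ≤ span F ((u' ∘ e) '' (e ⁻¹' R)) := by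
    intro R hR
    rw [span_le]
    rintro _ ⟨b, hb, rfl⟩
    obtain ⟨d, hd, hk⟩ := key b
    rw [SetLike.mem_coe, ← hd]
    refine sum_mem fun k _ => ?_
    by_cases h0 : d k = 0
    · simp [h0]
    · exact smul_mem _ _ (subset_span ⟨k, hR b hb k (hk k h0), rfl⟩)
  have hdisj : Disjoint (span F (u' '' S)) (span F (u' '' Sᶜ)) :=
    (hli.disjoint_span_image (s := e ⁻¹' S) (t := e ⁻¹' Sᶜ)
      (disjoint_compl_right.preimage e)).mono
      (hle S fun b hb k h => h.mp hb) (hle Sᶜ fun b hb k h hk => hb (h.mpr hk))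
  have haS : a ∈ S := ⟨1, one_ne_zero, (one_smul F _).symm⟩
  rcases hu' S hdisj with h | h
  · exact absurd haS (h ▸ Set.notMem_empty a)
  · obtain ⟨c, -, hc⟩ : b ∈ S := h ▸ Set.mem_univ b
    exact ⟨c, hc⟩

end Slices

/-- The product vector with components `y j`, restricted to the factors in `s`, as a function on
the product of all the index sets. -/
def prodFun {F J : Type*} [Field F] {ι : J → Type*} (s : Finset J) (y : ∀ j, ι j → F) :
    (∀ j, ι j) → F :=
  fun k => ∏ j ∈ s, y j (k j)

open Classical in
/-- A connected family of product vectors spanning a space of dimension `r` is non-parallel in at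
most `r - 1` factors. -/
lemma card_nonparallel_le {F J E : Type*} [Field F] [Finite E] [Nonempty E] {ι : J → Type*}
    (y : E → ∀ j, ι j → F) (hy : ∀ a j, y a j ≠ 0) (s : Finset J)
    (hs : SpanConnected F fun a => prodFun s (y a)) :
    (s.filter fun j => ¬ ∀ a b, ∃ c : F, y b j = c • y a j).card + 1 ≤
      finrank F (span F (Set.range fun a => prodFun s (y a))) := by
  induction s using Finset.induction_on with
  | empty =>
    obtain ⟨a⟩ := ‹Nonempty E›
    have := FiniteDimensional.span_of_finite F (Set.finite_range fun a => prodFun ∅ (y a))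
    have : Nonempty (∀ j, ι j) := ⟨fun j => (Function.ne_iff.mp (hy a j)).choose⟩
    simp only [Finset.filter_empty, Finset.card_empty, zero_add]
    rw [Nat.one_le_iff_ne_zero, Ne, finrank_eq_zero, span_eq_bot]
    intro h
    have h1 := congrFun (h _ ⟨a, rfl⟩) (Classical.arbitrary _)
    simp [prodFun] at h1
  | insert j s hj ih =>
    have hT : ∀ (i : ι j) (a : E),
        LinearMap.funLeft F F (fun k : ∀ j, ι j => Function.update k j i)
          (prodFun (insert j s) (y a)) = y a j i • prodFun s (y a) := by
      intro i a
      ext k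
      simp only [LinearMap.funLeft_apply, prodFun, Finset.prod_insert hj, Function.update_self,
        Pi.smul_apply, smul_eq_mul]
      congr 1
      refine Finset.prod_congr rfl fun l hl => ?_
      rw [Function.update_of_ne (ne_of_mem_of_not_mem hl hj)]
    have hinj : ∀ w : (∀ j, ι j) → F,
        (∀ i : ι j, LinearMap.funLeft F F (fun k : ∀ j, ι j => Function.update k j i) w = 0) →
        w = 0 := by
      intro w hw
      ext k
      have := congrFun (hw (k j)) k
      rwa [LinearMap.funLeft_apply, Function.update_eq_self] at this
    have hyj : ∀ a, y a j ≠ 0 := fun a => hy a j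
    have hconn := SpanConnected.of_slices (y := fun a => y a j) hT hinj hs
    have hih := ih hconn
    have hle := finrank_span_le_of_slices (y := fun a => y a j) hT hyj
    rw [Finset.filter_insert]
    split_ifs with hp
    · exact hih.trans hle
    · refine (Nat.succ_le_succ (Finset.card_insert_le j _)).trans ?_
      by_contra hlt
      refine hp (parallel_of_finrank_le (y := fun a => y a j) hT hyj hconn (by omega))

/-- Adjoining a linear combination with nonzero coefficients to a linearly independent family
gives a connected family; in matroid terms, it is a circuit. -/
lemma spanConnected_option_elim {F V A : Type*} [Field F] [Fintype A] [AddCommGroup V]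
    [Module F V] {u : A → V} (hu : LinearIndependent F u) {α : A → F} (hα : ∀ a, α a ≠ 0)
    {w : Option A → V} (hnone : w none = ∑ a, α a • u a) (hsome : ∀ a, w (some a) = u a) :
    SpanConnected F w := by
  classical
  -- The part not containing the adjoined vector is shown to be empty.
  have key : ∀ S : Set (Option A), none ∉ S →
      Disjoint (span F (w '' S)) (span F (w '' Sᶜ)) → S = ∅ := by
    intro S hS hd
    rw [disjoint_def] at hd
    have h0 : ∑ a, (if some a ∈ S then α a else 0) • u a = 0 := by
      apply hd
      · refine sum_mem fun a _ => ?_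
        split_ifs with h
        · exact smul_mem _ _ (subset_span ⟨some a, h, hsome a⟩)
        · simp
      · have : ∑ a, (if some a ∈ S then α a else 0) • u a =
            w none - ∑ a, (if some a ∈ S then 0 else α a) • u a := by
          rw [hnone, ← Finset.sum_sub_distrib]
          refine Finset.sum_congr rfl fun a _ => ?_
          split_ifs <;> simp
        rw [this]
        refine sub_mem (subset_span ⟨none, hS, rfl⟩) (sum_mem fun a _ => ?_)
        split_ifs with h
        · simp
        · exact smul_mem _ _ (subset_span ⟨some a, h, hsome a⟩)
    have h1 := Fintype.linearIndependent_iff.mp hu _ h0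
    rw [Set.eq_empty_iff_forall_notMem]
    rintro (_ | a) ha
    · exact hS ha
    · have := h1 a
      rw [if_pos ha] at this
      exact hα a this
  intro S hd
  by_cases hS : none ∈ S
  · right
    have := key Sᶜ (fun h => h hS) (by rw [compl_compl]; exact hd.symm)
    simpa using this
  · exact Or.inl (key S hS hd)

/-- If a nonzero linear combination of `n` linearly independent product vectors is
itself a product vector, then the vectors are non-parallel in at most `n - 1`
subsystems. -/
theorem product_combination_nonparallel {F : Type*} [Field F] {n m : ℕ}
    {X : Fin m → Type*} [∀ j, AddCommGroup (X j)] [∀ j, Module F (X j)]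
    (hn : 1 ≤ n) (hm : 1 ≤ m)
    (x : Fin n → ∀ j, X j) (hx : ∀ a j, x a j ≠ 0)
    (hli : LinearIndependent F fun a => tprod F (x a))
    (α : Fin n → F) (hα : ∀ a, α a ≠ 0)
    (hprod : IsProductVector (∑ a, α a • tprod F (x a))) :
    Set.ncard {j : Fin m | 1 < Set.finrank F (Set.range fun a => x a j)} ≤ n - 1 := by
  classical
  obtain ⟨v, hv, hveq⟩ := hprod
  let B := fun j => Basis.ofVectorSpace F (X j)
  let z : Option (Fin n) → ∀ j, X j := fun o => o.elim v x
  have hz : ∀ a j, z a j ≠ 0 := by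
    rintro (_ | a) j
    · exact hv j
    · exact hx a j
  let y : Option (Fin n) → ∀ j, _ → F := fun a j => ⇑((B j).repr (z a j))
  have hy : ∀ a j, y a j ≠ 0 := by
    intro a j h
    exact hz a j ((B j).repr.map_eq_zero_iff.mp (DFunLike.coe_injective h))
  -- Expansion in the product basis, as an injective linear map into functions.
  let Φ : (⨂[F] j, X j) →ₗ[F] _ → F :=
    Finsupp.lcoeFun ∘ₗ (Basis.piTensorProduct B).repr.toLinearMap
  have hΦ : Function.Injective Φ :=
    DFunLike.coe_injective.comp (Basis.piTensorProduct B).repr.injective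
  have hΦt : ∀ a, Φ (tprod F (z a)) = prodFun Finset.univ (y a) := by
    intro a
    ext k
    exact Basis.piTensorProduct_repr_tprod_apply B (z a) k
  have hli' : LinearIndependent F fun a => prodFun Finset.univ (y (some a)) := by
    have h := hli.map' Φ (LinearMap.ker_eq_bot.mpr hΦ)
    have he : (Φ ∘ fun a => tprod F (x a)) = fun a => prodFun Finset.univ (y (some a)) :=
      funext fun a => hΦt (some a)
    rwa [he] at h
  have hnone : prodFun Finset.univ (y none) =
      ∑ a, α a • prodFun Finset.univ (y (some a)) := by
    rw [← hΦt none]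
    change Φ (tprod F v) = _
    rw [← hveq, map_sum]
    refine Finset.sum_congr rfl fun a _ => ?_
    rw [map_smul, ← hΦt (some a)]
    rfl
  have hmain := card_nonparallel_le y hy Finset.univ
    (spanConnected_option_elim hli' hα hnone fun _ => rfl)
  have hspan : span F (Set.range fun a => prodFun Finset.univ (y a)) =
      span F (Set.range fun a => prodFun Finset.univ (y (some a))) := by
    apply le_antisymm
    · rw [span_le]
      rintro _ ⟨_ | a, rfl⟩
      · simp only [SetLike.mem_coe, hnone]
        exact sum_mem fun a _ => smul_mem _ _ (subset_span ⟨a, rfl⟩)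
      · exact subset_span ⟨a, rfl⟩
    · exact span_mono (by rintro _ ⟨a, rfl⟩; exact ⟨some a, rfl⟩)
  rw [hspan, finrank_span_eq_card hli', Fintype.card_fin] at hmain
  refine le_trans ?_ (Nat.le_sub_one_of_lt hmain)
  rw [← Set.ncard_coe_finset]
  refine Set.ncard_le_ncard ?_ (Finset.finite_toSet _)
  intro j hj
  simp only [Finset.coe_filter, Finset.mem_univ, true_and, Set.mem_ofPred_eq] at hj ⊢
  intro hp
  have hsub : span F (Set.range fun a => x a j) ≤ span F {v j} := by
    rw [span_le]
    rintro _ ⟨a, rfl⟩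
    obtain ⟨c, hc⟩ := hp none (some a)
    refine mem_span_singleton.mpr ⟨c, (B j).repr.injective ?_⟩
    rw [map_smul]
    exact DFunLike.coe_injective hc.symm
  have := finrank_mono hsub
  rw [finrank_span_singleton (hv j)] at this
  exact absurd hj (not_lt.mpr this)
end

section
/- Let m ≥ 1 be an integer, let X_1, ..., X_m be vector spaces over a field F, and let x_1 = x_{1,1} ⊗ ... ⊗ x_{1,m} and x_2 = x_{2,1} ⊗ ... ⊗ x_{2,m} be product vectors in X_1 ⊗ ... ⊗ X_m. Then the following three statements are equivalent: (1) for all scalars α_1, α_2 ∈ F, the vector α_1 x_1 + α_2 x_2 is a product vector or zero; (2) for some non-zero scalars α_1, α_2 ∈ F \ {0}, the vector α_1 x_1 + α_2 x_2 is a product vector or zero; (3) there exists at most a single index j ∈ {1,...,m} for which dim span{x_{1,j}, x_{2,j}} = 2. -/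
/-!
If `x₁ j` and `x₂ j` are parallel for every `j` other than some `j₀`, all scalars can be moved into
the slot `j₀`, and `α₁ x₁ + α₂ x₂` becomes a single elementary tensor
(`exists_tprod_of_parallel`).

Conversely, contracting an elementary tensor `tprod v` with functionals `f`, `g` in the slots `j`,
`k`, and with fixed functionals `h i` elsewhere, gives a function of `(f, g)` all of whose `2 × 2`
minors vanish (`contract_minor`). If the components of `x₁`, `x₂` are independent in both slots
`j ≠ k`, take `f` and `g` among the dual pairs, and choose each `h i` nonvanishing on both `x₁ i`
and `x₂ i` (`exists_dual_ne_zero`). The `2 × 2` matrix of contractions of `α₁ x₁ + α₂ x₂` is then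
diagonal with nonzero diagonal, so `α₁ x₁ + α₂ x₂` is not an elementary tensor
(`not_tprod_of_two_independent`).
-/

open scoped TensorProduct
open PiTensorProduct

theorem finrank_pair_eq_two_iff {F V : Type*} [Field F] [AddCommGroup V] [Module F V] (a b : V) :
    Set.finrank F ({a, b} : Set V) = 2 ↔ LinearIndependent F ![a, b] := by
  rw [linearIndependent_iff_card_eq_finrank_span, Fintype.card_fin, eq_comm]
  rw [Matrix.range_cons_cons_empty]

/-- Functionals can be prescribed arbitrarily on an independent pair. -/
theorem exists_dual_pair {F V : Type*} [Field F] [AddCommGroup V] [Module F V] {a b : V}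
    (h : LinearIndependent F ![a, b]) (s t : F) : ∃ f : V →ₗ[F] F, f a = s ∧ f b = t := by
  obtain ⟨g, hg⟩ := LinearMap.exists_leftInverse_of_injective
    (Finsupp.linearCombination F ![a, b]) (LinearMap.ker_eq_bot.2 h)
  have ha : g a = Finsupp.single 0 1 := by
    simpa using LinearMap.congr_fun hg (Finsupp.single 0 1)
  have hb : g b = Finsupp.single 1 1 := by
    simpa using LinearMap.congr_fun hg (Finsupp.single 1 1)
  refine ⟨(Finsupp.linearCombination F ![s, t]).comp g, ?_, ?_⟩
  · simp [ha]
  · simp [hb]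

theorem exists_smul_eq_of_finrank_ne {F V : Type*} [Field F] [AddCommGroup V] [Module F V]
    {a b : V} (ha : a ≠ 0) (h : Set.finrank F ({a, b} : Set V) ≠ 2) : ∃ c : F, b = c • a := by
  rw [Ne, finrank_pair_eq_two_iff, LinearIndependent.pair_iff' ha] at h
  push Not at h
  obtain ⟨c, hc⟩ := h
  exact ⟨c, hc.symm⟩

/-- Two nonzero vectors admit a common functional vanishing on neither. This holds over every
field, including the two-element one. -/
theorem exists_dual_ne_zero {F V : Type*} [Field F] [AddCommGroup V] [Module F V] {a b : V}
    (ha : a ≠ 0) (hb : b ≠ 0) : ∃ f : V →ₗ[F] F, f a ≠ 0 ∧ f b ≠ 0 := by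
  by_cases h : Set.finrank F ({a, b} : Set V) = 2
  · obtain ⟨f, h₁, h₂⟩ := exists_dual_pair ((finrank_pair_eq_two_iff a b).1 h) 1 1
    exact ⟨f, by simp [h₁], by simp [h₂]⟩
  · obtain ⟨c, rfl⟩ := exists_smul_eq_of_finrank_ne ha h
    have hc : c ≠ 0 := fun hc => hb (by simp [hc])
    obtain ⟨f, hf⟩ : ∃ f : V →ₗ[F] F, f a ≠ 0 := by
      by_contra! hcon
      exact ha ((Module.forall_dual_apply_eq_zero_iff F a).1 hcon)
    exact ⟨f, hf, by simp [hc, hf]⟩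

section Contract

variable {F : Type*} [Field F] {m : ℕ} {X : Fin m → Type*}
  [∀ j, AddCommGroup (X j)] [∀ j, Module F (X j)]

/-- Contraction of a tensor with one functional per slot: `f` in slot `j`, `g` in slot `k`, and
`h i` in every other slot `i`. It is meant for `j ≠ k`; when `j = k`, `g` takes precedence. -/
noncomputable def contract (h : ∀ i, X i →ₗ[F] F) (j k : Fin m)
    (f : X j →ₗ[F] F) (g : X k →ₗ[F] F) : (⨂[F] i, X i) →ₗ[F] F :=
  PiTensorProduct.lift ((MultilinearMap.mkPiAlgebra F (Fin m) F).compLinearMap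
    (Function.update (Function.update h j f) k g))

theorem contract_tprod (h : ∀ i, X i →ₗ[F] F) (j k : Fin m)
    (f : X j →ₗ[F] F) (g : X k →ₗ[F] F) (v : ∀ i, X i) :
    contract h j k f g (tprod F v) =
      ∏ i, Function.update (Function.update h j f) k g i (v i) := by
  simp [contract]

theorem contract_minor (h : ∀ i, X i →ₗ[F] F) {j k : Fin m} (hjk : j ≠ k)
    (f f' : X j →ₗ[F] F) (g g' : X k →ₗ[F] F) (v : ∀ i, X i) :
    contract h j k f g (tprod F v) * contract h j k f' g' (tprod F v) =
      contract h j k f g' (tprod F v) * contract h j k f' g (tprod F v) := by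
  simp only [contract_tprod, ← Finset.prod_mul_distrib]
  refine Finset.prod_congr rfl fun i _ => ?_
  by_cases hk : i = k
  · subst hk
    simp [mul_comm]
  · by_cases hj : i = j
    · subst hj
      simp [hk]
    · simp [hk, hj]

theorem contract_tprod_eq_zero_left (h : ∀ i, X i →ₗ[F] F) {j k : Fin m} (hjk : j ≠ k)
    (f : X j →ₗ[F] F) (g : X k →ₗ[F] F) (v : ∀ i, X i) (hf : f (v j) = 0) :
    contract h j k f g (tprod F v) = 0 := by
  rw [contract_tprod]
  exact Finset.prod_eq_zero (Finset.mem_univ j) (by simp [hjk, hf])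

theorem contract_tprod_eq_zero_right (h : ∀ i, X i →ₗ[F] F) (j k : Fin m)
    (f : X j →ₗ[F] F) (g : X k →ₗ[F] F) (v : ∀ i, X i) (hg : g (v k) = 0) :
    contract h j k f g (tprod F v) = 0 := by
  rw [contract_tprod]
  exact Finset.prod_eq_zero (Finset.mem_univ k) (by simp [hg])

theorem contract_tprod_ne_zero (h : ∀ i, X i →ₗ[F] F) (j k : Fin m)
    (f : X j →ₗ[F] F) (g : X k →ₗ[F] F) (v : ∀ i, X i) (hh : ∀ i, h i (v i) ≠ 0)
    (hf : f (v j) ≠ 0) (hg : g (v k) ≠ 0) :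
    contract h j k f g (tprod F v) ≠ 0 := by
  rw [contract_tprod]
  refine Finset.prod_ne_zero_iff.2 fun i _ => ?_
  by_cases hk : i = k
  · subst hk
    simpa using hg
  · by_cases hj : i = j
    · subst hj
      simpa [hk] using hf
    · simpa [hk, hj] using hh i

theorem not_tprod_of_two_independent (x₁ x₂ : ∀ j, X j) (hx₁ : ∀ j, x₁ j ≠ 0)
    (hx₂ : ∀ j, x₂ j ≠ 0) {j k : Fin m} (hjk : j ≠ k)
    (hj : Set.finrank F ({x₁ j, x₂ j} : Set (X j)) = 2)
    (hk : Set.finrank F ({x₁ k, x₂ k} : Set (X k)) = 2)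
    {α₁ α₂ : F} (h₁ : α₁ ≠ 0) (h₂ : α₂ ≠ 0) (v : ∀ j, X j) :
    α₁ • tprod F x₁ + α₂ • tprod F x₂ ≠ tprod F v := by
  intro hv
  choose h hh₁ hh₂ using fun i => exists_dual_ne_zero (F := F) (hx₁ i) (hx₂ i)
  rw [finrank_pair_eq_two_iff] at hj hk
  obtain ⟨f, hf₁, hf₂⟩ := exists_dual_pair hj 1 0
  obtain ⟨f', hf'₁, hf'₂⟩ := exists_dual_pair hj 0 1
  obtain ⟨g, hg₁, hg₂⟩ := exists_dual_pair hk 1 0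
  obtain ⟨g', hg'₁, hg'₂⟩ := exists_dual_pair hk 0 1
  have key := contract_minor h hjk f f' g g' v
  simp only [← hv, map_add, map_smul, smul_eq_mul] at key
  rw [contract_tprod_eq_zero_left h hjk f g x₂ hf₂,
    contract_tprod_eq_zero_left h hjk f' g' x₁ hf'₁,
    contract_tprod_eq_zero_left h hjk f g' x₂ hf₂,
    contract_tprod_eq_zero_right h j k f g' x₁ hg'₁] at key
  have n₁ := contract_tprod_ne_zero h j k f g x₁ hh₁ (by simp [hf₁]) (by simp [hg₁])
  have n₂ := contract_tprod_ne_zero h j k f' g' x₂ hh₂ (by simp [hf'₂]) (by simp [hg'₂])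
  simp [h₁, h₂, n₁, n₂] at key

theorem exists_tprod_of_parallel (x₁ x₂ : ∀ j, X j) (hx₁ : ∀ j, x₁ j ≠ 0) (j₀ : Fin m)
    (h : ∀ j, j ≠ j₀ → ∃ c : F, x₂ j = c • x₁ j) (α₁ α₂ : F) :
    IsProductVector (α₁ • tprod F x₁ + α₂ • tprod F x₂) ∨
      α₁ • tprod F x₁ + α₂ • tprod F x₂ = 0 := by
  -- The slot `j₀` carries no relation, so its scalar is set to `1`.
  have h' : ∀ j, ∃ c : F, x₂ j = c • Function.update x₁ j₀ (x₂ j₀) j := by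
    intro j
    by_cases hj : j = j₀
    · subst hj
      exact ⟨1, by simp⟩
    · obtain ⟨c, hc⟩ := h j hj
      exact ⟨c, by simp [hj, hc]⟩
  choose c hc using h'
  have e₂ : tprod F x₂ = (∏ j, c j) • tprod F (Function.update x₁ j₀ (x₂ j₀)) := by
    rw [← MultilinearMap.map_smul_univ]
    exact congrArg _ (funext hc)
  have e : α₁ • tprod F x₁ + α₂ • tprod F x₂ =
      tprod F (Function.update x₁ j₀ (α₁ • x₁ j₀ + (α₂ * ∏ j, c j) • x₂ j₀)) := by
    rw [MultilinearMap.map_update_add, MultilinearMap.map_update_smul,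
      MultilinearMap.map_update_smul, Function.update_eq_self, e₂, smul_smul]
  rw [e]
  by_cases hz : α₁ • x₁ j₀ + (α₂ * ∏ j, c j) • x₂ j₀ = 0
  · right
    exact MultilinearMap.map_coord_zero _ j₀ (by simp [hz])
  · left
    refine ⟨_, fun j => ?_, rfl⟩
    by_cases hj : j = j₀
    · subst hj
      simpa using hz
    · simpa [hj] using hx₁ j

end Contract

/-- The sum of two product vectors is a product vector (or zero) iff they are
non-parallel in at most one subsystem. -/
theorem sum_of_two_products {F : Type*} [Field F] {m : ℕ}
    {X : Fin m → Type*} [∀ j, AddCommGroup (X j)] [∀ j, Module F (X j)]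
    (hm : 1 ≤ m) (x₁ x₂ : ∀ j, X j) (hx₁ : ∀ j, x₁ j ≠ 0) (hx₂ : ∀ j, x₂ j ≠ 0) :
    ((∀ α₁ α₂ : F, IsProductVector (α₁ • tprod F x₁ + α₂ • tprod F x₂) ∨
        α₁ • tprod F x₁ + α₂ • tprod F x₂ = 0) ↔
      (∃ α₁ α₂ : F, α₁ ≠ 0 ∧ α₂ ≠ 0 ∧
        (IsProductVector (α₁ • tprod F x₁ + α₂ • tprod F x₂) ∨
          α₁ • tprod F x₁ + α₂ • tprod F x₂ = 0))) ∧
    ((∃ α₁ α₂ : F, α₁ ≠ 0 ∧ α₂ ≠ 0 ∧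
        (IsProductVector (α₁ • tprod F x₁ + α₂ • tprod F x₂) ∨
          α₁ • tprod F x₁ + α₂ • tprod F x₂ = 0)) ↔
      Set.ncard {j : Fin m | Set.finrank F ({x₁ j, x₂ j} : Set (X j)) = 2} ≤ 1) := by
  have h12 : (∀ α₁ α₂ : F, IsProductVector (α₁ • tprod F x₁ + α₂ • tprod F x₂) ∨
        α₁ • tprod F x₁ + α₂ • tprod F x₂ = 0) →
      (∃ α₁ α₂ : F, α₁ ≠ 0 ∧ α₂ ≠ 0 ∧
        (IsProductVector (α₁ • tprod F x₁ + α₂ • tprod F x₂) ∨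
          α₁ • tprod F x₁ + α₂ • tprod F x₂ = 0)) :=
    fun h => ⟨1, 1, one_ne_zero, one_ne_zero, h 1 1⟩
  have h23 : (∃ α₁ α₂ : F, α₁ ≠ 0 ∧ α₂ ≠ 0 ∧
        (IsProductVector (α₁ • tprod F x₁ + α₂ • tprod F x₂) ∨
          α₁ • tprod F x₁ + α₂ • tprod F x₂ = 0)) →
      Set.ncard {j : Fin m | Set.finrank F ({x₁ j, x₂ j} : Set (X j)) = 2} ≤ 1 := by
    rintro ⟨α₁, α₂, h₁, h₂, h⟩
    -- Zero is also an elementary tensor in the weak sense, because there is at least one slot.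
    obtain ⟨v, hv⟩ : ∃ v : ∀ j, X j, α₁ • tprod F x₁ + α₂ • tprod F x₂ = tprod F v := by
      rcases h with ⟨v, -, hv⟩ | h
      · exact ⟨v, hv⟩
      · exact ⟨0, h.trans (MultilinearMap.map_coord_zero _ (⟨0, hm⟩ : Fin m) rfl).symm⟩
    rw [Set.ncard_le_one (Set.toFinite _)]
    intro j hj k hk
    by_contra hjk
    exact not_tprod_of_two_independent x₁ x₂ hx₁ hx₂ hjk hj hk h₁ h₂ v hv
  have h31 : Set.ncard {j : Fin m | Set.finrank F ({x₁ j, x₂ j} : Set (X j)) = 2} ≤ 1 →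
      (∀ α₁ α₂ : F, IsProductVector (α₁ • tprod F x₁ + α₂ • tprod F x₂) ∨
        α₁ • tprod F x₁ + α₂ • tprod F x₂ = 0) := by
    intro h
    rw [Set.ncard_le_one (Set.toFinite _)] at h
    -- If no slot is independent, any slot can absorb the scalars.
    obtain ⟨j₀, hj₀⟩ : ∃ j₀ : Fin m, ∀ j, j ≠ j₀ →
        Set.finrank F ({x₁ j, x₂ j} : Set (X j)) ≠ 2 := by
      by_cases hex : ∃ j₀ : Fin m, Set.finrank F ({x₁ j₀, x₂ j₀} : Set (X j₀)) = 2
      · obtain ⟨j₀, hj₀⟩ := hex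
        exact ⟨j₀, fun j hne hj => hne (h j hj j₀ hj₀)⟩
      · exact ⟨⟨0, hm⟩, fun j _ hj => hex ⟨j, hj⟩⟩
    exact exists_tprod_of_parallel x₁ x₂ hx₁ j₀
      fun j hj => exists_smul_eq_of_finrank_ne (hx₁ j) (hj₀ j hj)
  exact ⟨⟨h12, fun h => h31 (h23 h)⟩, ⟨h23, fun h => h12 (h31 h)⟩⟩
end

section
/- Let m ≥ 1 be an integer and let X_1, ..., X_m be vector spaces over a field F. Then every two-dimensional subspace S ⊆ X_1 ⊗ ... ⊗ X_m falls into one of the following four categories: (1) every vector of S is a product vector or zero; (2) there exist precisely two distinct one-dimensional subspaces of S all of whose vectors are product vectors or zero, and every other non-zero vector in S is entangled; (3) there exists precisely one one-dimensional subspace of S all of whose vectors are product vectors or zero, and every other non-zero vector in S is entangled; (4) every non-zero vector in S is entangled. -/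
/-!
A two-dimensional subspace with three pairwise non-proportional product vectors consists of product
vectors and zero; the four cases are then the possible numbers (at least three, two, one, none) of
lines spanned by product vectors.

Rescaling, let the three vectors be `a = ⨂ a_j`, `b = ⨂ b_j` and `a + b = ⨂ c_j`. At most one pair
`a_j, b_j` is linearly independent (`not_two_independent`). Indeed, if the pairs at `j ≠ k` were
both independent, pick functionals `f_i, g_i` for `i = j, k` separating `a_i` from `b_i`, and at the
other indices functionals which vanish at neither `a_i` nor `b_i`. Evaluating a product vector on
these families satisfies the vanishing of a `2 × 2` minor, `φ_ff φ_gg = φ_fg φ_gf`, whereas at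
`a + b` the left-hand side is nonzero and the right-hand side is zero. Hence `a` and `b` may be
written with the same components at all indices but one, and so all their linear combinations are
elementary tensors (`exists_tprod_of_add`).
-/

open scoped TensorProduct
open PiTensorProduct

/-- A non-zero vector that is not a product vector is entangled. -/
def IsEntangled {F : Type*} [Field F] {m : ℕ} {X : Fin m → Type*}
    [∀ j, AddCommGroup (X j)] [∀ j, Module F (X j)]
    (x : ⨂[F] j, X j) : Prop :=
  x ≠ 0 ∧ ¬ IsProductVector x

section Helpers

variable {F : Type*} [Field F] {m : ℕ} {X : Fin m → Type*}
  [∀ j, AddCommGroup (X j)] [∀ j, Module F (X j)]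

lemma tprod_product_or_zero (v : ∀ j, X j) :
    IsProductVector (tprod F v) ∨ tprod F v = 0 := by
  by_cases h : ∀ j, v j ≠ 0
  · exact Or.inl ⟨v, h, rfl⟩
  · push Not at h
    obtain ⟨j, hj⟩ := h
    exact Or.inr ((PiTensorProduct.tprod F).map_coord_zero j hj)

/-- A scalar is absorbed into one component; this needs an index `j`, that is, `m ≥ 1`. -/
lemma smul_tprod_eq (j : Fin m) (c : F) (v : ∀ j, X j) :
    c • tprod F v = tprod F (Function.update v j (c • v j)) := by
  rw [(PiTensorProduct.tprod F).map_update_smul, Function.update_eq_self]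

/-- Evaluation of a tensor on a family of functionals. -/
noncomputable def evalDual (l : ∀ j, X j →ₗ[F] F) : (⨂[F] j, X j) →ₗ[F] F :=
  lift ((MultilinearMap.mkPiAlgebra F (Fin m) F).compLinearMap l)

lemma evalDual_tprod (l : ∀ j, X j →ₗ[F] F) (v : ∀ j, X j) :
    evalDual l (tprod F v) = ∏ j, l j (v j) := by
  simp [evalDual]

lemma exists_separating {V : Type*} [AddCommGroup V] [Module F V] {x y : V}
    (hy : y ≠ 0) (h : LinearIndependent F ![x, y]) :
    ∃ f : V →ₗ[F] F, f x ≠ 0 ∧ f y = 0 := by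
  have hx : x ∉ Submodule.span F {y} := by
    intro hx
    obtain ⟨c, hc⟩ := Submodule.mem_span_singleton.1 hx
    exact (LinearIndependent.pair_iff' hy).1 (LinearIndependent.pair_symm_iff.1 h) c hc
  obtain ⟨f, hf, hle⟩ := Submodule.exists_le_ker_of_notMem hx
  exact ⟨f, hf, hle (Submodule.mem_span_singleton_self y)⟩

lemma exists_nonvanishing {V : Type*} [AddCommGroup V] [Module F V] {x y : V}
    (hx : x ≠ 0) (hy : y ≠ 0) : ∃ f : V →ₗ[F] F, f x ≠ 0 ∧ f y ≠ 0 := by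
  by_cases h : LinearIndependent F ![x, y]
  · obtain ⟨f, hfx, hfy⟩ := exists_separating hy h
    obtain ⟨g, hgy, hgx⟩ := exists_separating hx (LinearIndependent.pair_symm_iff.1 h)
    exact ⟨f + g, by simpa [hgx] using hfx, by simpa [hfy] using hgy⟩
  · rw [LinearIndependent.pair_iff' hx] at h
    push Not at h
    obtain ⟨c, rfl⟩ := h
    obtain ⟨f, hf, -⟩ := Submodule.exists_le_ker_of_notMem
      (show x ∉ (⊥ : Submodule F V) by simpa using hx)
    have hc : c ≠ 0 := fun h0 => hy (by simp [h0])
    exact ⟨f, hf, by simp [hc, hf]⟩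

/-- If a sum of two product vectors is an elementary tensor, then their components are linearly
independent at no more than one index. -/
lemma not_two_independent {a b c : ∀ j, X j} (ha : ∀ j, a j ≠ 0) (hb : ∀ j, b j ≠ 0)
    (habc : tprod F a + tprod F b = tprod F c) {j k : Fin m} (hjk : j ≠ k)
    (hj : LinearIndependent F ![a j, b j]) : ¬ LinearIndependent F ![a k, b k] := by
  intro hk
  choose h hha hhb using fun i => exists_nonvanishing (F := F) (ha i) (hb i)
  obtain ⟨fj, fja, fjb⟩ := exists_separating (hb j) hj
  obtain ⟨gj, gjb, gja⟩ := exists_separating (ha j) (LinearIndependent.pair_symm_iff.1 hj)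
  obtain ⟨fk, fka, fkb⟩ := exists_separating (hb k) hk
  obtain ⟨gk, gkb, gka⟩ := exists_separating (ha k) (LinearIndependent.pair_symm_iff.1 hk)
  let L : (X j →ₗ[F] F) → (X k →ₗ[F] F) → ∀ i, X i →ₗ[F] F := fun p q =>
    Function.update (Function.update h k q) j p
  have Lj : ∀ p q, L p q j = p := fun p q => by simp [L]
  have Lk : ∀ p q, L p q k = q := fun p q => by simp [L, hjk.symm]
  have Lo : ∀ p q i, i ≠ j → i ≠ k → L p q i = h i := fun p q i h1 h2 => by simp [L, h1, h2]
  have zj : ∀ p q (v : ∀ i, X i), p (v j) = 0 → evalDual (L p q) (tprod F v) = 0 := by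
    intro p q v h0
    rw [evalDual_tprod]
    exact Finset.prod_eq_zero (Finset.mem_univ j) (by rw [Lj, h0])
  have zk : ∀ p q (v : ∀ i, X i), q (v k) = 0 → evalDual (L p q) (tprod F v) = 0 := by
    intro p q v h0
    rw [evalDual_tprod]
    exact Finset.prod_eq_zero (Finset.mem_univ k) (by rw [Lk, h0])
  have nz : ∀ p q (v : ∀ i, X i), (∀ i, h i (v i) ≠ 0) → p (v j) ≠ 0 → q (v k) ≠ 0 →
      evalDual (L p q) (tprod F v) ≠ 0 := by
    intro p q v hv hp hq
    rw [evalDual_tprod]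
    refine Finset.prod_ne_zero_iff.2 fun i _ => ?_
    by_cases h1 : i = j
    · subst h1; rwa [Lj]
    by_cases h2 : i = k
    · subst h2; rwa [Lk]
    rw [Lo p q i h1 h2]; exact hv i
  have minor : evalDual (L fj fk) (tprod F c) * evalDual (L gj gk) (tprod F c) =
      evalDual (L fj gk) (tprod F c) * evalDual (L gj fk) (tprod F c) := by
    simp only [evalDual_tprod, ← Finset.prod_mul_distrib]
    refine Finset.prod_congr rfl fun i _ => ?_
    by_cases h1 : i = j
    · subst h1; simp only [Lj]
    by_cases h2 : i = k
    · subst h2; simp only [Lk]; exact mul_comm _ _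
    simp only [Lo _ _ i h1 h2]
  rw [← habc] at minor
  simp only [map_add] at minor
  rw [zj fj fk b fjb, zj gj gk a gja, zk fj gk a gka, zj fj gk b fjb] at minor
  simp only [add_zero, zero_add, zero_mul] at minor
  exact mul_ne_zero (nz fj fk a hha fja fka) (nz gj gk b hhb gjb gkb) minor

/-- If a sum of two product vectors is an elementary tensor, then so are all their linear
combinations. -/
lemma exists_tprod_of_add (hm : 1 ≤ m) {a b c : ∀ j, X j} (ha : ∀ j, a j ≠ 0) (hb : ∀ j, b j ≠ 0)
    (habc : tprod F a + tprod F b = tprod F c) (s t : F) :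
    ∃ w : ∀ j, X j, s • tprod F a + t • tprod F b = tprod F w := by
  obtain ⟨j, hj⟩ : ∃ j : Fin m, ∀ i, i ≠ j → ¬ LinearIndependent F ![a i, b i] := by
    by_cases h : ∃ j, LinearIndependent F ![a j, b j]
    · obtain ⟨j, hj⟩ := h
      exact ⟨j, fun i hi => not_two_independent ha hb habc hi.symm hj⟩
    · push Not at h
      exact ⟨⟨0, hm⟩, fun i _ => h i⟩
  have hr : ∀ i, ∃ r : F, i ≠ j → r • a i = b i := by
    intro i
    by_cases hi : i = j
    · exact ⟨0, fun h => absurd hi h⟩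
    · have := hj i hi
      rw [LinearIndependent.pair_iff' (ha i)] at this
      push Not at this
      exact this.imp fun _ h _ => h
  choose r hr using hr
  -- Setting the scalar at `j` to `1` expresses `b` as a rescaling of `update a j (b j)`.
  have hb' : b = fun i => Function.update r j 1 i • Function.update a j (b j) i := by
    funext i
    by_cases hi : i = j
    · subst hi; simp
    · simp [hi, hr i hi]
  have hbt : tprod F b =
      (∏ i, Function.update r j 1 i) • tprod F (Function.update a j (b j)) := by
    conv_lhs => rw [hb']
    exact (PiTensorProduct.tprod F).map_smul_univ _ _
  refine ⟨Function.update a j (s • a j + (t * ∏ i, Function.update r j 1 i) • b j), ?_⟩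
  rw [(PiTensorProduct.tprod F).map_update_add, (PiTensorProduct.tprod F).map_update_smul, (PiTensorProduct.tprod F).map_update_smul,
    Function.update_eq_self, hbt, smul_smul]

lemma IsProductVector.ne_zero {x : ⨂[F] j, X j} (hx : IsProductVector x) : x ≠ 0 := by
  obtain ⟨v, hv, rfl⟩ := hx
  choose f hf _ using fun i => exists_nonvanishing (F := F) (hv i) (hv i)
  intro h0
  have := evalDual_tprod f v
  rw [h0, map_zero] at this
  exact Finset.prod_ne_zero_iff.2 (fun i _ => hf i) this.symm

lemma IsProductVector.smul (hm : 1 ≤ m) {x : ⨂[F] j, X j} (hx : IsProductVector x)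
    {c : F} (hc : c ≠ 0) : IsProductVector (c • x) := by
  have hne := smul_ne_zero hc hx.ne_zero
  obtain ⟨v, hv, rfl⟩ := hx
  rw [smul_tprod_eq ⟨0, hm⟩] at hne ⊢
  exact (tprod_product_or_zero _).resolve_right hne

lemma IsProductVector.of_mem_span (hm : 1 ≤ m) {p v : ⨂[F] j, X j} (hp : IsProductVector p)
    (hv : v ∈ Submodule.span F {p}) : IsProductVector v ∨ v = 0 := by
  obtain ⟨c, rfl⟩ := Submodule.mem_span_singleton.1 hv
  by_cases hc : c = 0
  · exact Or.inr (by simp [hc])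
  · exact Or.inl (hp.smul hm hc)

/-- If two product vectors have a product vector as a linear combination with both coefficients
nonzero, then every linear combination of them is a product vector or zero. -/
lemma product_or_zero_of_three (hm : 1 ≤ m) {p q : ⨂[F] j, X j} (hp : IsProductVector p)
    (hq : IsProductVector q) {s t : F} (hs : s ≠ 0) (ht : t ≠ 0)
    (hr : IsProductVector (s • p + t • q)) (x y : F) :
    IsProductVector (x • p + y • q) ∨ x • p + y • q = 0 := by
  obtain ⟨a, ha, hpa⟩ := hp.smul hm hs
  obtain ⟨b, hb, hqb⟩ := hq.smul hm ht
  obtain ⟨c, -, hc⟩ := hr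
  rw [hpa, hqb] at hc
  obtain ⟨w, hw⟩ := exists_tprod_of_add hm ha hb hc (x * s⁻¹) (y * t⁻¹)
  rw [← hpa, ← hqb, smul_smul, smul_smul, inv_mul_cancel_right₀ hs,
    inv_mul_cancel_right₀ ht] at hw
  rw [hw]
  exact tprod_product_or_zero w

end Helpers

/-- Classification of two-dimensional subspaces of a tensor product space. -/
theorem two_dim_subspace_classification {F : Type*} [Field F] {m : ℕ}
    {X : Fin m → Type*} [∀ j, AddCommGroup (X j)] [∀ j, Module F (X j)]
    (hm : 1 ≤ m) (S : Submodule F (⨂[F] j, X j))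
    (hS : Module.finrank F S = 2) :
    -- (1) every vector of S is a product vector or zero
    (∀ v ∈ S, IsProductVector v ∨ v = 0) ∨
    -- (2) precisely two distinct lines of product vectors, all else entangled
    (∃ L₁ L₂ : Submodule F (⨂[F] j, X j), L₁ ≤ S ∧ L₂ ≤ S ∧
      Module.finrank F L₁ = 1 ∧ Module.finrank F L₂ = 1 ∧ L₁ ≠ L₂ ∧
      (∀ v ∈ L₁, IsProductVector v ∨ v = 0) ∧
      (∀ v ∈ L₂, IsProductVector v ∨ v = 0) ∧
      (∀ v ∈ S, v ∉ L₁ → v ∉ L₂ → IsEntangled v)) ∨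
    -- (3) precisely one line of product vectors, all else entangled
    (∃ L : Submodule F (⨂[F] j, X j), L ≤ S ∧ Module.finrank F L = 1 ∧
      (∀ v ∈ L, IsProductVector v ∨ v = 0) ∧
      (∀ v ∈ S, v ∉ L → IsEntangled v)) ∨
    -- (4) every non-zero vector of S is entangled
    (∀ v ∈ S, v ≠ 0 → IsEntangled v) := by
  by_cases h1 : ∃ p ∈ S, IsProductVector p
  swap
  · exact Or.inr (Or.inr (Or.inr fun v hv h0 => ⟨h0, fun h => h1 ⟨v, hv, h⟩⟩))
  obtain ⟨p, hpS, hp⟩ := h1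
  by_cases h2 : ∃ q ∈ S, IsProductVector q ∧ q ∉ Submodule.span F {p}
  swap
  · refine Or.inr (Or.inr (Or.inl ⟨Submodule.span F {p}, ?_, finrank_span_singleton hp.ne_zero,
      fun v hv => hp.of_mem_span hm hv, fun v hv hvp => ⟨?_, fun h => h2 ⟨v, hv, h, hvp⟩⟩⟩))
    · simpa using hpS
    · rintro rfl
      exact hvp (zero_mem _)
  obtain ⟨q, hqS, hq, hqp⟩ := h2
  by_cases h3 : ∃ r ∈ S, IsProductVector r ∧ r ∉ Submodule.span F {p} ∧ r ∉ Submodule.span F {q}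
  swap
  · refine Or.inr (Or.inl ⟨Submodule.span F {p}, Submodule.span F {q}, by simpa using hpS,
      by simpa using hqS, finrank_span_singleton hp.ne_zero, finrank_span_singleton hq.ne_zero,
      ?_, fun v hv => hp.of_mem_span hm hv, fun v hv => hq.of_mem_span hm hv,
      fun v hv hvp hvq => ⟨?_, fun h => h3 ⟨v, hv, h, hvp, hvq⟩⟩⟩)
    · intro h
      exact hqp (h ▸ Submodule.mem_span_singleton_self q)
    · rintro rfl
      exact hvp (zero_mem _)
  obtain ⟨r, hrS, hr, hrp, hrq⟩ := h3
  have hli : LinearIndependent F ![p, q] :=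
    (LinearIndependent.pair_iff' hp.ne_zero).2 fun c hc =>
      hqp (Submodule.mem_span_singleton.2 ⟨c, hc⟩)
  have hspan : Submodule.span F {p, q} = S := by
    have : FiniteDimensional F S := Module.finite_of_finrank_eq_succ hS
    refine Submodule.eq_of_le_of_finrank_eq ?_ ?_
    · rw [Submodule.span_le]
      rintro x (rfl | rfl)
      exacts [hpS, hqS]
    · have := finrank_span_eq_card hli
      rw [Matrix.range_cons_cons_empty] at this
      simpa [hS] using this
  rw [← hspan] at hrS
  obtain ⟨s, t, rfl⟩ := Submodule.mem_span_pair.1 hrS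
  have hs : s ≠ 0 := by
    rintro rfl
    exact hrq (Submodule.mem_span_singleton.2 ⟨t, by simp⟩)
  have ht : t ≠ 0 := by
    rintro rfl
    exact hrp (Submodule.mem_span_singleton.2 ⟨s, by simp⟩)
  refine Or.inl fun v hv => ?_
  rw [← hspan] at hv
  obtain ⟨x, y, rfl⟩ := Submodule.mem_span_pair.1 hv
  exact product_or_zero_of_three hm hp hq hs ht hr x y
end

section
/- For every field F and every integer n ≥ 3, there exist product vectors x_1, ..., x_n in the (n−2)-fold tensor product F^2 ⊗ ... ⊗ F^2 such that: (1) for every index j ∈ {1,...,n−2}, dim span{x_{a,j} : a ∈ {1,...,n}} ≥ 2; and (2) Σ_{a=1}^n x_a = 0, while for every subset Γ ⊂ {1,...,n} of size 1 ≤ |Γ| ≤ ⌊n/2⌋ one has Σ_{a ∈ Γ} x_a ≠ 0. Hence the bound n ≥ m + 2 in the two-dimensional case is tight. -/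
/-!
Write `n = k + 3`, so that there are `m = k + 1` tensor factors, and put `v = (1,0)`, `w = (0,1)`,
`u = v + w = (1,1)`. Splitting one factor `u` after the other as `v + w` gives
`u^⊗m = v ⊗ u^⊗(m-1) + w ⊗ v ⊗ u^⊗(m-2) + ⋯ + w^⊗(m-1) ⊗ v + w^⊗m`,
with `m + 1` summands on the right. Together with `-u^⊗m` these are `n` product vectors of sum
zero (`sum_tprod_vec`).

In the standard basis of the tensor product, indexed by `{0,1}^m`, the summands on the right are
the indicator functions of the cells of a partition of the cube `{0,1}^m` (a point lies in the cell
given by the position of its first `0`), and `-u^⊗m` is minus the indicator function of the whole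
cube. So no nonempty proper subfamily sums to zero: reading off the coordinate at a point of a
suitable cell gives `1` or `-1` (`sum_tprod_vec_ne_zero`). This holds over every field, and
`n / 2 < n` makes every `Γ` in the statement proper.
-/

open scoped TensorProduct
open PiTensorProduct

namespace TwoDimTight

variable {F : Type*} [Field F]

/-- The `j`-th factor of the `a`-th product vector: for `a = 0` the vector `u = (1,1)`, negated in
the factor `j = 0`; for `a ≥ 1` the factors are `w, …, w, v, u, …, u` with `v` in
position `a - 1`. -/
def vec (F : Type*) [Field F] (a j : ℕ) : Fin 2 → F :=
  if a = 0 then (if j = 0 then ![-1, -1] else ![1, 1])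
  else if j + 1 < a then ![0, 1] else if j + 1 = a then ![1, 0] else ![1, 1]

/-- The factors `w, …, w, u, …, u` with `i` copies of `w`: what remains of `u^⊗m` after
splitting off the first `i` summands. -/
def tail (F : Type*) [Field F] (i j : ℕ) : Fin 2 → F := if j < i then ![0, 1] else ![1, 1]

/-- The point `(1, …, 1, 0, …, 0)` with `b - 1` ones, which lies in the `b`-th cell. -/
def cellPoint (b j : ℕ) : Fin 2 := if j + 1 < b then 1 else 0

/-- The coordinate of a tensor at `s ∈ {0,1}^m` in the standard basis. -/
noncomputable def coord (F : Type*) [Field F] {m : ℕ} (s : Fin m → Fin 2) :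
    (⨂[F] (_ : Fin m), (Fin 2 → F)) →ₗ[F] F :=
  lift ((MultilinearMap.mkPiAlgebra F (Fin m) F).compLinearMap
    fun j => LinearMap.proj (s j))

lemma coord_tprod {m : ℕ} (s : Fin m → Fin 2) (x : Fin m → Fin 2 → F) :
    coord F s (tprod F x) = ∏ j, x j (s j) := by
  simp [coord]

lemma vec_ne_zero (a j : ℕ) : vec F a j ≠ 0 := by
  intro h
  have h0 := congrFun h 0
  have h1 := congrFun h 1
  unfold vec at h0 h1
  split_ifs at h0 h1 <;> simp_all

lemma two_le_finrank (k : ℕ) (j : Fin (k + 1)) :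
    2 ≤ Set.finrank F (Set.range fun a : Fin (k + 3) => vec F a j) := by
  have hspan : Submodule.span F (Set.range fun a : Fin (k + 3) => vec F a j) = ⊤ := by
    rw [eq_top_iff]
    intro z _
    have h0 : (![1, 0] : Fin 2 → F) ∈ Set.range fun a : Fin (k + 3) => vec F a j :=
      ⟨⟨j + 1, by omega⟩, by simp [vec]⟩
    have h1 : (![0, 1] : Fin 2 → F) ∈ Set.range fun a : Fin (k + 3) => vec F a j :=
      ⟨⟨j + 2, by omega⟩, by simp [vec]⟩
    have hz : z = z 0 • ![1, 0] + z 1 • ![0, 1] := by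
      ext i; fin_cases i <;> simp
    rw [hz]
    exact add_mem (Submodule.smul_mem _ _ (Submodule.subset_span h0))
      (Submodule.smul_mem _ _ (Submodule.subset_span h1))
  rw [Set.finrank, hspan, finrank_top]
  simp

lemma tprod_vec_zero (k : ℕ) :
    tprod F (fun j : Fin (k + 1) => vec F 0 j) =
      -tprod F (fun j : Fin (k + 1) => tail F 0 j) := by
  have h : (fun j : Fin (k + 1) => vec F 0 j) =
      Function.update (fun j : Fin (k + 1) => tail F 0 j) 0 ((-1 : F) • tail F 0 0) := by
    funext j
    by_cases hj : j = 0
    · subst hj; simp [vec, tail]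
    · have : (j : ℕ) ≠ 0 := fun h => hj (Fin.ext h)
      simp [vec, tail, hj]
  rw [h, MultilinearMap.map_update_smul, neg_one_smul]
  congr 2
  exact Function.update_eq_self (0 : Fin (k + 1)) (fun j : Fin (k + 1) => tail F 0 j)

/-- One splitting step `u = v + w`, in position `i`. -/
lemma tprod_vec_succ (k i : ℕ) (hi : i < k + 1) :
    tprod F (fun j : Fin (k + 1) => vec F (i + 1) j) =
      tprod F (fun j : Fin (k + 1) => tail F i j) -
        tprod F (fun j : Fin (k + 1) => tail F (i + 1) j) := by
  have key (z : Fin 2 → F) (g : ℕ → Fin 2 → F) (hz : g i = z)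
      (hg : ∀ j, j ≠ i → g j = tail F i j) :
      (fun j : Fin (k + 1) => g j) =
        Function.update (fun j : Fin (k + 1) => tail F i j) ⟨i, hi⟩ z := by
    funext j
    by_cases hj : j = ⟨i, hi⟩
    · subst hj; simp [hz]
    · rw [Function.update_of_ne hj]
      exact hg _ fun h => hj (Fin.ext h)
  rw [eq_sub_iff_add_eq,
    key ![1, 0] (vec F (i + 1)) (by simp [vec])
      (by intro j hj; simp [vec, tail, hj]),
    key ![0, 1] (tail F (i + 1)) (by simp [tail])
      (by
        intro j hj
        have : j < i + 1 ↔ j < i := by omega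
        simp [tail, this]),
    key ![1, 1] (tail F i) (by simp [tail]) (fun _ _ => rfl),
    ← MultilinearMap.map_update_add]
  simp

lemma sum_tprod_vec (k : ℕ) :
    ∑ a : Fin (k + 3), tprod F (fun j : Fin (k + 1) => vec F a j) = 0 := by
  rw [Fin.sum_univ_eq_sum_range
    (fun a => tprod F (fun j : Fin (k + 1) => vec F a j)) (k + 3),
    Finset.sum_range_succ, Finset.sum_range_succ', tprod_vec_zero,
    Finset.sum_congr rfl fun i hi => tprod_vec_succ k i (Finset.mem_range.1 hi),
    Finset.sum_range_sub' fun i => tprod F (fun j : Fin (k + 1) => tail F i j)]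
  have h : (fun j : Fin (k + 1) => vec F (k + 2) j) = fun j : Fin (k + 1) => tail F (k + 1) j := by
    funext j
    have hj : (j : ℕ) ≤ k := by omega
    simp [vec, tail, hj]
  rw [h]
  abel

lemma prod_vec_zero (k b : ℕ) :
    ∏ j : Fin (k + 1), vec F 0 j (cellPoint b j) = -1 := by
  rw [Fin.prod_univ_succ, Finset.prod_eq_one]
  · simp only [vec, cellPoint]
    split_ifs <;> simp_all
  · intro j _
    simp only [vec, cellPoint]
    split_ifs <;> simp_all

/-- The product vectors of index `≥ 1` are indicator functions of disjoint cells. -/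
lemma prod_vec (k a b : ℕ) (ha : a ≠ 0) (hb : b ≠ 0) (hak : a < k + 3) (hbk : b < k + 3) :
    ∏ j : Fin (k + 1), vec F a j (cellPoint b j) = if a = b then 1 else 0 := by
  split_ifs with hab
  · subst hab
    refine Finset.prod_eq_one fun j _ => ?_
    simp only [vec, cellPoint, ha, if_false]
    split_ifs <;> simp
  · rcases lt_or_gt_of_ne hab with h | h
    · refine Finset.prod_eq_zero (Finset.mem_univ ⟨a - 1, by omega⟩) ?_
      have h1 : a - 1 + 1 = a := by omega
      simp [vec, cellPoint, ha, h1, h]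
    · refine Finset.prod_eq_zero (Finset.mem_univ ⟨b - 1, by omega⟩) ?_
      have h1 : b - 1 + 1 = b := by omega
      simp [vec, cellPoint, ha, h1, h]

lemma coord_sum (k : ℕ) (Γ : Finset (Fin (k + 3))) (b : Fin (k + 3)) (hb : b ≠ 0) :
    coord F (fun j : Fin (k + 1) => cellPoint b j)
        (∑ a ∈ Γ, tprod F (fun j : Fin (k + 1) => vec F a j)) =
      (if b ∈ Γ then 1 else 0) - (if 0 ∈ Γ then 1 else 0) := by
  have hterm (a : Fin (k + 3)) :
      coord F (fun j : Fin (k + 1) => cellPoint b j)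
        (tprod F (fun j : Fin (k + 1) => vec F a j)) =
      (if b = a then 1 else 0) - (if 0 = a then 1 else 0) := by
    rw [coord_tprod]
    by_cases ha : a = 0
    · subst ha
      simpa [hb] using prod_vec_zero (F := F) k b
    · rw [prod_vec k a b (fun h => ha (Fin.ext h)) (fun h => hb (Fin.ext h)) a.2 b.2]
      simp [Fin.val_inj, Ne.symm ha, eq_comm (a := a)]
  rw [map_sum, Finset.sum_congr rfl fun a _ => hterm a, Finset.sum_sub_distrib]
  simp

/-- No nonempty proper subfamily sums to zero. -/
lemma sum_tprod_vec_ne_zero (k : ℕ) (Γ : Finset (Fin (k + 3))) (hne : Γ.Nonempty)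
    (hproper : Γ ≠ Finset.univ) :
    ∑ a ∈ Γ, tprod F (fun j : Fin (k + 1) => vec F a j) ≠ 0 := by
  intro h
  have hc (b : Fin (k + 3)) (hb : b ≠ 0) := coord_sum (F := F) k Γ b hb
  simp only [h, map_zero] at hc
  by_cases h0 : 0 ∈ Γ
  · -- the coordinate at a cell missing from `Γ` is `-1`
    obtain ⟨b, hb⟩ : ∃ b, b ∉ Γ := by
      by_contra! hall
      exact hproper (Finset.eq_univ_iff_forall.2 hall)
    have := hc b (by rintro rfl; exact hb h0)
    simp [hb, h0] at this
  · -- the coordinate at a cell belonging to `Γ` is `1`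
    obtain ⟨b, hb⟩ := hne
    have := hc b (by rintro rfl; exact h0 hb)
    simp [hb, h0] at this

end TwoDimTight

/-- Tightness of the two-dimensional case: for every `n ≥ 3` there are `n` product
vectors in the `(n-2)`-fold tensor product of `F²` satisfying the hypotheses of the
two-dimensional case with `m = n - 2`. -/
theorem two_dimensional_case_tight (F : Type*) [Field F] (n : ℕ) (hn : 3 ≤ n) :
    ∃ x : Fin n → (Fin (n - 2) → Fin 2 → F),
      (∀ a j, x a j ≠ 0) ∧
      (∀ j, 2 ≤ Set.finrank F (Set.range fun a => x a j)) ∧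
      (∑ a, tprod F (x a) : ⨂[F] (_ : Fin (n - 2)), (Fin 2 → F)) = 0 ∧
      ∀ Γ : Finset (Fin n), 1 ≤ Γ.card → Γ.card ≤ n / 2 →
        (∑ a ∈ Γ, tprod F (x a) : ⨂[F] (_ : Fin (n - 2)), (Fin 2 → F)) ≠ 0 := by
  obtain ⟨k, rfl⟩ : ∃ k, n = k + 3 := ⟨n - 3, by omega⟩
  refine ⟨fun a j => TwoDimTight.vec F a j, fun a j => TwoDimTight.vec_ne_zero _ _,
    TwoDimTight.two_le_finrank k, TwoDimTight.sum_tprod_vec k, fun Γ h1 h2 => ?_⟩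
  refine TwoDimTight.sum_tprod_vec_ne_zero k Γ (Finset.card_pos.1 h1) ?_
  rintro rfl
  rw [Finset.card_univ, Fintype.card_fin] at h2
  omega
end
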